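/- arXiv:1404.1629 — 2 statements merged into one kernel-verified Lean document; each statement's English description precedes it below -/
import Mathlib

section
/- There exists a constant N, depending only on d, δ, K_0, and G, such that for every K ≥ 0 one has in G the inequalities |u_K − g| + |v_K − g| ≤ Nρ and |u_K| + |v_K| ≤ N, where ρ(x) = dist(x, G^c). -/
noncomputable section

open MeasureTheory Set Filter Topology
open scoped ENNReal NNReal

/-- Euclidean space `ℝ^d`. -/
abbrev E (d : ℕ) : Type := EuclideanSpace ℝ (Fin d)

/-- Euclidean norm of a vector given as `Fin d → ℝ`. -/
def vecNorm {d : ℕ} (v : Fin d → ℝ) : ℝ := Real.sqrt (∑ i, (v i) ^ 2)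

/-- Hilbert–Schmidt norm `‖σ‖² = tr σσ*` of a `d × d` matrix. -/
def matNorm {d : ℕ} (m : Fin d → Fin d → ℝ) : ℝ := Real.sqrt (∑ i, ∑ j, (m i j) ^ 2)

/-- `m ∈ S_δ`: `m` is symmetric and `δ|ξ|² ≤ m_{ij}ξ^iξ^j ≤ δ⁻¹|ξ|²` for all `ξ`. -/
def memSdelta {d : ℕ} (δ : ℝ) (m : Fin d → Fin d → ℝ) : Prop :=
  (∀ i j, m i j = m j i) ∧
  ∀ ξ : Fin d → ℝ,
    δ * (∑ i, (ξ i) ^ 2) ≤ (∑ i, ∑ j, m i j * ξ i * ξ j) ∧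
    (∑ i, ∑ j, m i j * ξ i * ξ j) ≤ δ⁻¹ * (∑ i, (ξ i) ^ 2)

/-- First partial derivative `D_i u(x)`. -/
def D1 {d : ℕ} (u : E d → ℝ) (x : E d) (i : Fin d) : ℝ :=
  fderiv ℝ u x (EuclideanSpace.single i 1)

/-- Second partial derivative `D_{ij} u(x)`. -/
def D2 {d : ℕ} (u : E d → ℝ) (x : E d) (i j : Fin d) : ℝ :=
  fderiv ℝ (fun y => fderiv ℝ u y (EuclideanSpace.single j 1)) x (EuclideanSpace.single i 1)

/-- Third partial derivative `D_{ijk} u(x)`. -/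
def D3 {d : ℕ} (u : E d → ℝ) (x : E d) (i j k : Fin d) : ℝ :=
  fderiv ℝ (fun y => D2 u y j k) x (EuclideanSpace.single i 1)

/-- `L^{αβ}u(x) = a^{αβ}_{ij}(x) D_{ij}u(x) + b^{αβ}_i(x) D_i u(x) - c^{αβ}(x) u(x)`. -/
def Lop {d : ℕ} {A B : Type} (a : A → B → E d → Fin d → Fin d → ℝ)
    (b : A → B → E d → Fin d → ℝ) (c : A → B → E d → ℝ)
    (α : A) (β : B) (u : E d → ℝ) (x : E d) : ℝ :=
  (∑ i, ∑ j, a α β x i j * D2 u x i j) + (∑ i, b α β x i * D1 u x i) - c α β x * u x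

/-- The Isaacs operator `F[u](x) = sup_α inf_β [L^{αβ}u(x) + f^{αβ}(x)]`. -/
def Fop {d : ℕ} {A B : Type} (a : A → B → E d → Fin d → Fin d → ℝ)
    (b : A → B → E d → Fin d → ℝ) (c f : A → B → E d → ℝ) (u : E d → ℝ) (x : E d) : ℝ :=
  ⨆ α : A, ⨅ β : B, (Lop a b c α β u x + f α β x)

/-- `P[u](x) = P(D_{ij}u(x), D_i u(x), u(x))`. -/
def Pop {d : ℕ} (P : (Fin d → Fin d → ℝ) → (Fin d → ℝ) → ℝ → ℝ) (u : E d → ℝ) (x : E d) : ℝ :=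
  P (fun i j => D2 u x i j) (fun i => D1 u x i) (u x)

/-- Assumption 2.1 of the paper on the coefficients `a, b, c, f`
(with Hölder exponent `γ` for `a` and modulus `ω` for `b, c, f`). -/
def CoeffAssump {d : ℕ} {A B : Type} [MetricSpace A] [MetricSpace B]
    (δ K0 γ : ℝ) (ω : ℝ → ℝ)
    (a : A → B → E d → Fin d → Fin d → ℝ) (b : A → B → E d → Fin d → ℝ)
    (c f : A → B → E d → ℝ) : Prop :=
  (∀ α β x, memSdelta δ (a α β x)) ∧
  (∀ α β x, matNorm (a α β x) ≤ K0) ∧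
  (∀ α β x, vecNorm (b α β x) ≤ K0) ∧
  (∀ α β x, 0 ≤ c α β x ∧ c α β x ≤ K0) ∧
  (∀ α β x, |f α β x| ≤ K0) ∧
  (∀ α x, Continuous (fun β => a α β x) ∧ Continuous (fun β => b α β x) ∧
     Continuous (fun β => c α β x) ∧ Continuous (fun β => f α β x)) ∧
  (∀ (x : E d) (α₀ : A), ∀ ε : ℝ, 0 < ε → ∃ η : ℝ, 0 < η ∧ ∀ α : A, dist α α₀ < η → ∀ β : B,
     matNorm (fun i j => a α β x i j - a α₀ β x i j) < ε ∧
     vecNorm (fun i => b α β x i - b α₀ β x i) < ε ∧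
     |c α β x - c α₀ β x| < ε ∧ |f α β x - f α₀ β x| < ε) ∧
  (∀ α β x y, matNorm (fun i j => a α β x i j - a α β y i j) ≤ K0 * ‖x - y‖ ^ γ) ∧
  (∀ α β x y, vecNorm (fun i => b α β x i - b α β y i) ≤ K0 * ω ‖x - y‖) ∧
  (∀ α β x y, |c α β x - c α β y| ≤ K0 * ω ‖x - y‖) ∧
  (∀ α β x y, |f α β x - f α β y| ≤ K0 * ω ‖x - y‖)

/-- `ω` is a modulus of continuity with `t^χ ≤ ω(t)` on `[0,1]` (Remark 2.1). -/
def ModulusAssump (χ : ℝ) (ω : ℝ → ℝ) : Prop :=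
  Continuous ω ∧ MonotoneOn ω (Set.Ici 0) ∧ ω 0 = 0 ∧
  ∀ t : ℝ, t ∈ Set.Icc (0:ℝ) 1 → t ^ χ ≤ ω t

/-- `g ∈ C^{1,1}(ℝ^d)` with `‖g‖_{C^{1,1}} ≤ K0`. -/
def C11Bound {d : ℕ} (K0 : ℝ) (g : E d → ℝ) : Prop :=
  Differentiable ℝ g ∧ (∀ x, |g x| ≤ K0) ∧
  (∀ x y, |g x - g y| ≤ K0 * ‖x - y‖) ∧
  (∀ x y, ‖fderiv ℝ g x - fderiv ℝ g y‖ ≤ K0 * ‖x - y‖)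

/-- Properties of the special function `P(u_{ij}, u_i, u)` constructed in Krylov
[Methods Appl. Anal. 19 (2012)]: convex, positively homogeneous of degree one,
Lipschitz, with `(P_{u_{ij}}) ∈ S_δ̂`, `|(P_{u_i})| ≤ K₁`, `0 > P_u ≥ -K₁`
at any point of differentiability. -/
def PAssump {d : ℕ} (δhat K1 : ℝ)
    (P : (Fin d → Fin d → ℝ) → (Fin d → ℝ) → ℝ → ℝ) : Prop :=
  ConvexOn ℝ Set.univ (fun p : (Fin d → Fin d → ℝ) × (Fin d → ℝ) × ℝ => P p.1 p.2.1 p.2.2) ∧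
  (∀ t : ℝ, 0 ≤ t → ∀ m v r, P (t • m) (t • v) (t * r) = t * P m v r) ∧
  (∃ C : NNReal, LipschitzWith C
    (fun p : (Fin d → Fin d → ℝ) × (Fin d → ℝ) × ℝ => P p.1 p.2.1 p.2.2)) ∧
  (∀ p : (Fin d → Fin d → ℝ) × (Fin d → ℝ) × ℝ,
    DifferentiableAt ℝ (fun q : (Fin d → Fin d → ℝ) × (Fin d → ℝ) × ℝ => P q.1 q.2.1 q.2.2) p →
    memSdelta δhat (fun i j =>
      fderiv ℝ (fun q : (Fin d → Fin d → ℝ) × (Fin d → ℝ) × ℝ => P q.1 q.2.1 q.2.2) p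
        (Pi.single i (Pi.single j (1:ℝ)), 0, 0)) ∧
    vecNorm (fun i =>
      fderiv ℝ (fun q : (Fin d → Fin d → ℝ) × (Fin d → ℝ) × ℝ => P q.1 q.2.1 q.2.2) p
        (0, Pi.single i (1:ℝ), 0)) ≤ K1 ∧
    fderiv ℝ (fun q : (Fin d → Fin d → ℝ) × (Fin d → ℝ) × ℝ => P q.1 q.2.1 q.2.2) p (0, 0, 1) < 0 ∧
    -K1 ≤ fderiv ℝ (fun q : (Fin d → Fin d → ℝ) × (Fin d → ℝ) × ℝ => P q.1 q.2.1 q.2.2) p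
      (0, 0, 1))

/-- A bounded domain of class `C²` (described by a global `C²` defining function
with nonvanishing gradient on the boundary). -/
def IsC2Domain {d : ℕ} (G : Set (E d)) : Prop :=
  IsOpen G ∧ Bornology.IsBounded G ∧ G.Nonempty ∧ IsConnected G ∧
  ∃ ρ : E d → ℝ, ContDiff ℝ 2 ρ ∧ G = {x | ρ x < 0} ∧ ∀ x ∈ frontier G, fderiv ℝ ρ x ≠ 0

/-- The complete standing hypotheses (Assumption 2.1 etc.) of the paper. -/
def Setting {d : ℕ} {A B : Type} [MetricSpace A] [MetricSpace B]
    (δ K0 χ γ δhat K1 : ℝ) (ω : ℝ → ℝ)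
    (a : A → B → E d → Fin d → Fin d → ℝ) (b : A → B → E d → Fin d → ℝ)
    (c f : A → B → E d → ℝ) (G : Set (E d)) (g : E d → ℝ)
    (P : (Fin d → Fin d → ℝ) → (Fin d → ℝ) → ℝ → ℝ) : Prop :=
  1 ≤ d ∧ 0 < δ ∧ δ < 1 ∧ 0 ≤ K0 ∧ 0 < χ ∧ χ < 1 ∧
  γ = (4 - 3 * χ) / (8 - 4 * χ) ∧ 0 < δhat ∧ δhat < δ ∧ K0 ≤ K1 ∧
  Nonempty A ∧ Nonempty B ∧
  TopologicalSpace.SeparableSpace A ∧ TopologicalSpace.SeparableSpace B ∧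
  CoeffAssump δ K0 γ ω a b c f ∧ IsC2Domain G ∧ C11Bound K0 g ∧ PAssump δhat K1 P

/-- `u` is a solution of `max(F[u], P[u] - K) = 0` in `G` of class
`C^{1,1}_{loc}(G) ∩ C(Ḡ)` with boundary data `g` (the equation holding at almost
every point, as the second derivatives of a `C^{1,1}_{loc}` function exist a.e.). -/
def IsUSol {d : ℕ} {A B : Type} (a : A → B → E d → Fin d → Fin d → ℝ)
    (b : A → B → E d → Fin d → ℝ) (c f : A → B → E d → ℝ)
    (G : Set (E d)) (g : E d → ℝ)
    (P : (Fin d → Fin d → ℝ) → (Fin d → ℝ) → ℝ → ℝ) (K : ℝ) (u : E d → ℝ) : Prop :=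
  ContinuousOn u (closure G) ∧ Set.EqOn u g (frontier G) ∧
  DifferentiableOn ℝ u G ∧
  (∀ x ∈ G, ∃ r : ℝ, 0 < r ∧ Metric.ball x r ⊆ G ∧
     ∃ C : NNReal, LipschitzOnWith C (fderiv ℝ u) (Metric.ball x r)) ∧
  (∀ᵐ x ∂(volume : Measure (E d)), x ∈ G →
     max (Fop a b c f u x) (Pop P u x - K) = 0)

/-- `v` is a solution of `min(F[v], -P[-v] + K) = 0` in `G` of class
`C^{1,1}_{loc}(G) ∩ C(Ḡ)` with boundary data `g`. -/
def IsVSol {d : ℕ} {A B : Type} (a : A → B → E d → Fin d → Fin d → ℝ)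
    (b : A → B → E d → Fin d → ℝ) (c f : A → B → E d → ℝ)
    (G : Set (E d)) (g : E d → ℝ)
    (P : (Fin d → Fin d → ℝ) → (Fin d → ℝ) → ℝ → ℝ) (K : ℝ) (v : E d → ℝ) : Prop :=
  ContinuousOn v (closure G) ∧ Set.EqOn v g (frontier G) ∧
  DifferentiableOn ℝ v G ∧
  (∀ x ∈ G, ∃ r : ℝ, 0 < r ∧ Metric.ball x r ⊆ G ∧
     ∃ C : NNReal, LipschitzOnWith C (fderiv ℝ v) (Metric.ball x r)) ∧
  (∀ᵐ x ∂(volume : Measure (E d)), x ∈ G →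
     min (Fop a b c f v x) (-(Pop P (fun y => -(v y)) x) + K) = 0)

/-- `G_ε = {x ∈ G : dist(x, ∂G) > ε}`. -/
def Gshrink {d : ℕ} (G : Set (E d)) (ε : ℝ) : Set (E d) :=
  {x ∈ G | ε < Metric.infDist x (frontier G)}

/-- `u ∈ C^{1+χ}(Q)` with `‖u‖_{C^{1+χ}(Q)} ≤ Cb` (stated through the three
constituent quantities of the norm). -/
def HolderBound {d : ℕ} (χ : ℝ) (Q : Set (E d)) (u : E d → ℝ) (Cb : ℝ) : Prop :=
  (∀ x ∈ Q, DifferentiableAt ℝ u x) ∧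
  (∀ x ∈ Q, |u x| ≤ Cb) ∧
  (∀ x ∈ Q, ∀ y ∈ Q, |u x - u y| ≤ Cb * ‖x - y‖) ∧
  (∀ x ∈ Q, ∀ y ∈ Q, vecNorm (fun i => D1 u x i - D1 u y i) ≤ Cb * ‖x - y‖ ^ χ)

/-- `w` is a (continuous) viscosity solution of `F[w] = 0` in `G` with `w = g` on `∂G`. -/
def ViscositySolution {d : ℕ} {A B : Type} (a : A → B → E d → Fin d → Fin d → ℝ)
    (b : A → B → E d → Fin d → ℝ) (c f : A → B → E d → ℝ)
    (G : Set (E d)) (g : E d → ℝ) (w : E d → ℝ) : Prop :=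
  ContinuousOn w (closure G) ∧ Set.EqOn w g (frontier G) ∧
  (∀ φ : E d → ℝ, ContDiff ℝ (⊤ : ℕ∞) φ → ∀ x0 ∈ G,
     IsLocalMax (fun x => φ x - w x) x0 → φ x0 - w x0 = 0 → Fop a b c f φ x0 ≤ 0) ∧
  (∀ φ : E d → ℝ, ContDiff ℝ (⊤ : ℕ∞) φ → ∀ x0 ∈ G,
     IsLocalMin (fun x => φ x - w x) x0 → φ x0 - w x0 = 0 → 0 ≤ Fop a b c f φ x0)

/-!
Both equations, for the unknown and for its negative, make the maximal operator of a class of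
linear elliptic operators at least `-K₀` almost everywhere: `F` is a sup-inf over members of the
class, and `P` is dominated by the maximal operator because, being positively homogeneous, it is
given by its own derivative wherever that exists. It therefore suffices to bound `u - g` from above
for such subsolutions `u`.

Let `Φ` be the exponential barrier of an exterior ball touching `G` at the boundary point nearest
to `x₀`; it is nonnegative, comparable to the distance to the complement at `x₀`, and every
operator of the class is very negative on it. If `u - g - Φ` were positive somewhere, it would
touch affine functions of small slope from below on a set of positive measure: the slopes fill a
ball, and the gradient map is locally Lipschitz. So some contact point is a point of second
differentiability at which the equation holds, and there `D²u ≤ D²Φ + 2K₀ I` makes every operator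
of the class smaller than `-K₀` on `u`.
-/

section LocallyLipschitz

variable {V W : Type*} [NormedAddCommGroup V] [NormedSpace ℝ V] [FiniteDimensional ℝ V]
  [MeasurableSpace V] [BorelSpace V] [NormedAddCommGroup W] [NormedSpace ℝ W]
  [FiniteDimensional ℝ W]

theorem addHaar_image_eq_zero_of_lipschitzOnWith [MeasurableSpace W] [BorelSpace W]
    (μ : Measure V) [μ.IsAddHaarMeasure] (ν : Measure W) [ν.IsAddHaarMeasure]
    (hdim : Module.finrank ℝ W = Module.finrank ℝ V) {T : V → W} {C : ℝ≥0} {S : Set V}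
    (hT : LipschitzOnWith C T S) (hS : μ S = 0) : ν (T '' S) = 0 := by
  have hS' : Measure.hausdorffMeasure (Module.finrank ℝ V) S = 0 :=
    Measure.absolutelyContinuous_isAddHaarMeasure _ μ hS
  have hTS : Measure.hausdorffMeasure (Module.finrank ℝ W) (T '' S) = 0 := by
    have hle := hT.hausdorffMeasure_image_le (Module.finrank ℝ V).cast_nonneg
    rw [hS', mul_zero, nonpos_iff_eq_zero] at hle
    rwa [hdim]
  exact Measure.absolutelyContinuous_isAddHaarMeasure ν _ hTS

theorem addHaar_image_eq_zero_of_locallyLipschitzOn [MeasurableSpace W] [BorelSpace W]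
    (μ : Measure V) [μ.IsAddHaarMeasure] (ν : Measure W) [ν.IsAddHaarMeasure]
    (hdim : Module.finrank ℝ W = Module.finrank ℝ V) {T : V → W} {S : Set V}
    (hT : LocallyLipschitzOn S T) (hS : μ S = 0) : ν (T '' S) = 0 := by
  have hloc (x : V) (hx : x ∈ S) : ∃ U ∈ 𝓝[S] x, ∃ C, LipschitzOnWith C T U :=
    let ⟨C, U, hU, hC⟩ := hT hx
    ⟨U, hU, C, hC⟩
  choose! U hU C hC using hloc
  obtain ⟨t, htS, ht, hcover⟩ := TopologicalSpace.countable_cover_nhdsWithin hU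
  have hsub : T '' S ⊆ ⋃ x ∈ t, T '' (S ∩ U x) := by
    rintro _ ⟨y, hy, rfl⟩
    obtain ⟨x, hx, hyx⟩ := mem_iUnion₂.1 (hcover hy)
    exact mem_iUnion₂.2 ⟨x, hx, y, ⟨hy, hyx⟩, rfl⟩
  refine measure_mono_null hsub ((measure_biUnion_null_iff ht).2 fun x hx => ?_)
  exact addHaar_image_eq_zero_of_lipschitzOnWith μ ν hdim
    ((hC x (htS hx)).mono inter_subset_right) (measure_mono_null inter_subset_left hS)

theorem ae_differentiableAt_of_locallyLipschitzOn (μ : Measure V) [μ.IsAddHaarMeasure]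
    {G : Set V} (hG : IsOpen G) {T : V → W} (hT : LocallyLipschitzOn G T) :
    ∀ᵐ x ∂μ, x ∈ G → DifferentiableAt ℝ T x := by
  rw [ae_iff]
  refine measure_null_of_locally_null _ fun x hx => ?_
  simp only [Classical.not_imp, mem_ofPred_eq] at hx
  obtain ⟨C, U, hU, hC⟩ := hT hx.1
  rw [hG.nhdsWithin_eq hx.1] at hU
  refine ⟨_, inter_mem_nhdsWithin _ (interior_mem_nhds.2 hU), measure_mono_null ?_
    (ae_iff.1 (hC.ae_differentiableWithinAt_of_mem (μ := μ)))⟩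
  rintro y ⟨hy, hyU⟩ hyd
  refine hy fun _ => (hyd (interior_subset hyU)).differentiableAt ?_
  exact mem_interior_iff_mem_nhds.1 hyU

end LocallyLipschitz

section Calculus

variable {V W : Type*} [NormedAddCommGroup V] [NormedSpace ℝ V] [NormedAddCommGroup W]
  [NormedSpace ℝ W]

theorem norm_sub_sub_fderiv_le_of_lipschitzOnWith {f : V → W} {s : Set V} (hs : Convex ℝ s)
    (hf : ∀ x ∈ s, DifferentiableAt ℝ f x) {C : ℝ≥0} (hC : LipschitzOnWith C (fderiv ℝ f) s)
    {x y : V} (hx : x ∈ s) (hy : y ∈ s) :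
    ‖f y - f x - fderiv ℝ f x (y - x)‖ ≤ C * ‖y - x‖ ^ 2 := by
  have hseg : segment ℝ x y ⊆ s := hs.segment_subset hx hy
  have hbound : ∀ w ∈ segment ℝ x y, ‖fderiv ℝ f w - fderiv ℝ f x‖ ≤ C * ‖y - x‖ := fun w hw =>
    (hC.norm_sub_le (hseg hw) hx).trans <| by
      gcongr
      exact norm_sub_le_of_mem_segment hw
  calc ‖f y - f x - fderiv ℝ f x (y - x)‖ ≤ C * ‖y - x‖ * ‖y - x‖ :=
        (convex_segment x y).norm_image_sub_le_of_norm_hasFDerivWithin_le'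
          (fun w hw => (hf w (hseg hw)).hasFDerivAt.hasFDerivWithinAt) hbound
          (left_mem_segment ℝ x y) (right_mem_segment ℝ x y)
    _ = C * ‖y - x‖ ^ 2 := by ring

theorem deriv_deriv_nonpos_of_isLocalMax {m : ℝ → ℝ} {t : ℝ} (hm : IsLocalMax m t)
    (hc : ContinuousAt m t) : deriv (deriv m) t ≤ 0 := by
  by_contra! hpos
  have hmin : IsLocalMin m t := isLocalMin_of_deriv_deriv_pos hpos hm.deriv_eq_zero hc
  have hconst : m =ᶠ[𝓝 t] fun _ => m t := by
    filter_upwards [hm, hmin] with s hle hge using le_antisymm hle hge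
  have hzero : deriv (deriv m) t = 0 := by simpa using hconst.deriv.deriv_eq
  exact hpos.ne' hzero

theorem nonpos_of_isLocalMax_of_hasDerivAt {m m' : ℝ → ℝ} {t m'' : ℝ} (hmax : IsLocalMax m t)
    (hm : ∀ᶠ s in 𝓝 t, HasDerivAt m (m' s) s) (hm' : HasDerivAt m' m'' t) : m'' ≤ 0 := by
  have hderiv : deriv m =ᶠ[𝓝 t] m' := hm.mono fun s hs => hs.deriv
  have hnonpos := deriv_deriv_nonpos_of_isLocalMax hmax hm.self_of_nhds.continuousAt
  rwa [hderiv.deriv_eq, hm'.deriv] at hnonpos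

theorem hasDerivAt_comp_line {φ : V → W} {x ξ : V} {t : ℝ}
    (hφ : DifferentiableAt ℝ φ (x + t • ξ)) :
    HasDerivAt (fun s : ℝ => φ (x + s • ξ)) (fderiv ℝ φ (x + t • ξ) ξ) t := by
  have hline : HasDerivAt (fun s : ℝ => x + s • ξ) ξ t := by
    simpa using ((hasDerivAt_id t).smul_const ξ).const_add x
  exact hφ.hasFDerivAt.comp_hasDerivAt t hline

theorem fderiv_fderiv_apply_self_le_of_eventually_le {φ : V → ℝ} {x : V}
    (hφ : ∀ᶠ y in 𝓝 x, DifferentiableAt ℝ φ y) (hφ₂ : DifferentiableAt ℝ (fderiv ℝ φ) x)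
    {κ : V →L[ℝ] ℝ} {C : ℝ} (hle : ∀ᶠ y in 𝓝 x, φ y ≤ φ x + κ (y - x) + C * ‖y - x‖ ^ 2)
    (ξ : V) : fderiv ℝ (fderiv ℝ φ) x ξ ξ ≤ 2 * C * ‖ξ‖ ^ 2 := by
  have htendsto : Tendsto (fun t : ℝ => x + t • ξ) (𝓝 0) (𝓝 x) := by
    have hcont : Continuous fun t : ℝ => x + t • ξ := by fun_prop
    simpa using hcont.tendsto 0
  have hmax : IsLocalMax (fun t : ℝ => φ (x + t • ξ) - κ ξ * t - C * ‖ξ‖ ^ 2 * t ^ 2) 0 := by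
    filter_upwards [htendsto.eventually hle] with t ht
    simp only [add_sub_cancel_left, map_smul, smul_eq_mul, norm_smul, mul_pow, Real.norm_eq_abs,
      sq_abs] at ht
    simp only [zero_smul, add_zero]
    linarith
  have hderiv : ∀ᶠ t in 𝓝 (0 : ℝ),
      HasDerivAt (fun t : ℝ => φ (x + t • ξ) - κ ξ * t - C * ‖ξ‖ ^ 2 * t ^ 2)
        (fderiv ℝ φ (x + t • ξ) ξ - κ ξ - C * ‖ξ‖ ^ 2 * (2 * t)) t := by
    filter_upwards [htendsto.eventually hφ] with t ht
    have hlin : HasDerivAt (fun t : ℝ => κ ξ * t) (κ ξ) t := by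
      simpa using (hasDerivAt_id t).const_mul (κ ξ)
    have hquad : HasDerivAt (fun t : ℝ => C * ‖ξ‖ ^ 2 * t ^ 2) (C * ‖ξ‖ ^ 2 * (2 * t)) t := by
      simpa using (hasDerivAt_pow 2 t).const_mul (C * ‖ξ‖ ^ 2)
    exact ((hasDerivAt_comp_line ht).sub hlin).sub hquad
  have hderiv₂ : HasDerivAt
      (fun t : ℝ => fderiv ℝ φ (x + t • ξ) ξ - κ ξ - C * ‖ξ‖ ^ 2 * (2 * t))
      (fderiv ℝ (fderiv ℝ φ) x ξ ξ - C * ‖ξ‖ ^ 2 * 2) 0 := by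
    have hφx : x + (0 : ℝ) • ξ = x := by simp
    have hφξ := (hasDerivAt_comp_line (φ := fderiv ℝ φ) (hφx.symm ▸ hφ₂)).clm_apply
      (hasDerivAt_const (0 : ℝ) ξ)
    rw [hφx, map_zero, add_zero] at hφξ
    have hlin : HasDerivAt (fun t : ℝ => C * ‖ξ‖ ^ 2 * (2 * t)) (C * ‖ξ‖ ^ 2 * 2) 0 := by
      simpa using ((hasDerivAt_id (0 : ℝ)).const_mul 2).const_mul (C * ‖ξ‖ ^ 2)
    exact (hφξ.sub_const (κ ξ)).sub hlin
  linarith [nonpos_of_isLocalMax_of_hasDerivAt hmax hderiv hderiv₂]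

theorem fderiv_apply_self_of_posHomogeneous {f : V → ℝ}
    (hf : ∀ t : ℝ, 0 ≤ t → ∀ q, f (t • q) = t * f q) {q : V}
    (hq : DifferentiableAt ℝ f q) : fderiv ℝ f q q = f q := by
  have hray : HasDerivAt (fun t : ℝ => t • q) q 1 := by
    simpa using (hasDerivAt_id (1 : ℝ)).smul_const q
  have hfq : HasFDerivAt f (fderiv ℝ f q) ((1 : ℝ) • q) := by simpa using hq.hasFDerivAt
  have hray_eq : (f ∘ fun t : ℝ => t • q) =ᶠ[𝓝 1] fun t => t * f q := by
    filter_upwards [lt_mem_nhds zero_lt_one] with t ht using hf t ht.le q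
  have hlin : HasDerivAt (fun t : ℝ => t * f q) (f q) 1 := by
    simpa using (hasDerivAt_id (1 : ℝ)).mul_const (f q)
  exact ((hfq.comp_hasDerivAt 1 hray).congr_of_eventuallyEq hray_eq.symm).unique hlin

theorem le_of_forall_fderiv_apply_le_of_posHomogeneous [FiniteDimensional ℝ V] {f : V → ℝ}
    (hf : ∀ t : ℝ, 0 ≤ t → ∀ q, f (t • q) = t * f q) {C : ℝ≥0} (hC : LipschitzWith C f)
    {q : V} {t : ℝ} (ht : ∀ p, DifferentiableAt ℝ f p → fderiv ℝ f p q ≤ t) : f q ≤ t := by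
  borelize V
  have hdense : Dense {p | DifferentiableAt ℝ f p} :=
    Measure.dense_of_ae (hC.ae_differentiableAt (μ := Measure.addHaar))
  have hnear : ∀ p ∈ {p | DifferentiableAt ℝ f p}, f q ≤ t + 2 * C * ‖p - q‖ := by
    intro p hp
    have hderiv : fderiv ℝ f p (p - q) ≤ C * ‖p - q‖ := (le_abs_self _).trans
      ((fderiv ℝ f p).le_of_opNorm_le (norm_fderiv_le_of_lipschitz ℝ hC) _)
    rw [map_sub, fderiv_apply_self_of_posHomogeneous hf hp] at hderiv
    have hlip : f q - f p ≤ C * ‖p - q‖ := by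
      rw [norm_sub_rev]
      exact (le_abs_self _).trans (hC.norm_sub_le q p)
    linarith [ht p hp]
  have hclosed : IsClosed {p | f q ≤ t + 2 * C * ‖p - q‖} :=
    isClosed_le continuous_const (by fun_prop)
  simpa using hdense.induction (P := fun p => f q ≤ t + 2 * C * ‖p - q‖) hnear hclosed q

end Calculus

section AffineContact

variable {V : Type*} [NormedAddCommGroup V] [NormedSpace ℝ V] {G : Set V} {w : V → ℝ}

theorem exists_pos_affine_contact (hG : IsOpen G) (hGc : IsCompact (closure G))
    (hw : ContinuousOn w (closure G)) (hwf : ∀ x ∈ frontier G, w x ≤ 0) {x₀ : V} (hx₀ : x₀ ∈ G)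
    {p : V →L[ℝ] ℝ} (hp : ∀ y ∈ closure G, -w x₀ < p (y - x₀)) :
    ∃ x ∈ G, 0 < w x ∧ ∀ y ∈ closure G, w y ≤ w x + p (y - x) := by
  have hcont : ContinuousOn (fun y => w y - p (y - x₀)) (closure G) :=
    hw.sub (by fun_prop)
  obtain ⟨x, hx, hmax⟩ := hGc.exists_isMaxOn ⟨x₀, subset_closure hx₀⟩ hcont
  have hle (y : V) (hy : y ∈ closure G) : w y - p (y - x₀) ≤ w x - p (x - x₀) := hmax hy
  have hpos : 0 < w x := by
    have hx₀le := hle x₀ (subset_closure hx₀)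
    rw [sub_self, map_zero, sub_zero] at hx₀le
    linarith [hp x hx]
  have hxG : x ∈ G := by
    by_contra hxG
    exact (hwf x ⟨hx, by rwa [hG.interior_eq]⟩).not_gt hpos
  refine ⟨x, hxG, hpos, fun y hy => ?_⟩
  have hsplit : p (y - x₀) = p (y - x) + p (x - x₀) := by rw [← map_add, sub_add_sub_cancel]
  linarith [hle y hy]

theorem fderiv_eq_of_affine_contact {x : V} (hw : DifferentiableAt ℝ w x) {p : V →L[ℝ] ℝ}
    (hle : ∀ᶠ y in 𝓝 x, w y ≤ w x + p (y - x)) : fderiv ℝ w x = p := by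
  have hmax : IsLocalMax (fun y => w y - p y) x := by
    filter_upwards [hle] with y hy
    rw [map_sub] at hy
    linarith
  exact sub_eq_zero.1 (hmax.hasFDerivAt_eq_zero (hw.hasFDerivAt.sub p.hasFDerivAt))

variable [FiniteDimensional ℝ V] [MeasurableSpace V] [BorelSpace V]

-- Every small slope `p` is the gradient of `w` at some contact point, while the locally Lipschitz
-- map `fderiv ℝ w` sends null sets to null sets; hence the contact points are not all in `Z`.
theorem exists_affine_contact_notMem (μ : Measure V) [μ.IsAddHaarMeasure] (hG : IsOpen G)
    (hGc : IsCompact (closure G)) (hwc : ContinuousOn w (closure G))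
    (hwf : ∀ x ∈ frontier G, w x ≤ 0) (hwd : DifferentiableOn ℝ w G)
    (hwl : LocallyLipschitzOn G (fderiv ℝ w)) {x₀ : V} (hx₀ : x₀ ∈ G) (hpos : 0 < w x₀)
    {Z : Set V} (hZ : μ Z = 0) {η : ℝ} (hη : 0 < η) :
    ∃ x ∈ G, x ∉ Z ∧ 0 < w x ∧ ‖fderiv ℝ w x‖ ≤ η ∧
      ∀ y ∈ G, w y ≤ w x + fderiv ℝ w x (y - x) := by
  borelize (V →L[ℝ] ℝ)
  obtain ⟨D, hDpos, hD⟩ : ∃ D > 0, ∀ y ∈ closure G, ‖y - x₀‖ ≤ D := by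
    obtain ⟨D, hDpos, hD⟩ := hGc.isBounded.subset_closedBall_lt 0 x₀
    exact ⟨D, hDpos, fun y hy => mem_closedBall_iff_norm.1 (hD hy)⟩
  have hdim : Module.finrank ℝ (V →L[ℝ] ℝ) = Module.finrank ℝ V :=
    (LinearMap.toContinuousLinearMap (𝕜 := ℝ) (E := V) (F' := ℝ)).finrank_eq.symm.trans
      Subspace.dual_finrank_eq
  have hnull : (Measure.addHaar : Measure (V →L[ℝ] ℝ)) (fderiv ℝ w '' (Z ∩ G)) = 0 :=
    addHaar_image_eq_zero_of_locallyLipschitzOn μ _ hdim (hwl.mono inter_subset_right)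
      (measure_mono_null inter_subset_left hZ)
  have hball : 0 < (Measure.addHaar : Measure (V →L[ℝ] ℝ)) (Metric.ball 0 (min η (w x₀ / D))) :=
    Metric.measure_ball_pos _ _ (lt_min hη (by positivity))
  obtain ⟨p, hp, hpZ⟩ : ∃ p ∈ Metric.ball 0 (min η (w x₀ / D)), p ∉ fderiv ℝ w '' (Z ∩ G) :=
    not_subset.1 fun hsub => hball.ne' (measure_mono_null hsub hnull)
  obtain ⟨hpη, hpD⟩ := lt_min_iff.1 (mem_ball_zero_iff.1 hp)
  obtain ⟨x, hxG, hxpos, hcontact⟩ := exists_pos_affine_contact hG hGc hwc hwf hx₀ (p := p) <| by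
    intro y hy
    refine neg_lt_of_abs_lt ?_
    calc |p (y - x₀)| ≤ ‖p‖ * D := p.le_opNorm_of_le (hD y hy)
      _ < w x₀ := (lt_div_iff₀ hDpos).1 hpD
  have hderiv : fderiv ℝ w x = p :=
    fderiv_eq_of_affine_contact (hwd.differentiableAt (hG.mem_nhds hxG)) <| by
      filter_upwards [hG.mem_nhds hxG] with y hy using hcontact y (subset_closure hy)
  refine ⟨x, hxG, fun hxZ => hpZ ⟨x, ⟨hxZ, hxG⟩, hderiv⟩, hxpos, hderiv ▸ hpη.le, ?_⟩
  exact fun y hy => hderiv ▸ hcontact y (subset_closure hy)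

end AffineContact

section Ellipticity

variable {d : ℕ} {δ K : ℝ} {a m n : Fin d → Fin d → ℝ} {b v : Fin d → ℝ} {c s t : ℝ}

open scoped MatrixOrder Matrix.Norms.L2Operator in
theorem memSdelta.exists_eq_sum_mul (hδ : 0 ≤ δ) (ha : memSdelta δ a) :
    ∃ e : Fin d → E d, ∀ i j, a i j = ∑ k, e k i * e k j := by
  have hpos : (Matrix.of a).PosSemidef := by
    refine Matrix.PosSemidef.of_dotProduct_mulVec_nonneg ?_ fun ξ => ?_
    · ext i j
      exact ha.1 j i
    · have hquad : star ξ ⬝ᵥ (Matrix.of a).mulVec ξ = ∑ i, ∑ j, a i j * ξ i * ξ j := by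
        simp only [dotProduct, Matrix.mulVec, Finset.mul_sum, Matrix.of_apply, star_trivial]
        exact Finset.sum_congr rfl fun i _ => Finset.sum_congr rfl fun j _ => by ring
      rw [hquad]
      exact (mul_nonneg hδ (by positivity)).trans (ha.2 ξ).1
  obtain ⟨B, hB⟩ := CStarAlgebra.nonneg_iff_eq_star_mul_self.mp hpos.nonneg
  refine ⟨fun k => WithLp.toLp 2 (B k), fun i j => ?_⟩
  simpa [Matrix.mul_apply, Matrix.star_eq_conjTranspose] using congrFun (congrFun hB i) j

theorem memSdelta.diag_le (ha : memSdelta δ a) (i : Fin d) : a i i ≤ δ⁻¹ := by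
  simpa [Pi.single_apply, ite_pow] using (ha.2 (Pi.single i 1)).2

theorem memSdelta.mono {δ' : ℝ} (hδ' : 0 < δ') (hle : δ' ≤ δ) (ha : memSdelta δ a) :
    memSdelta δ' a := by
  refine ⟨ha.1, fun ξ => ⟨le_trans ?_ (ha.2 ξ).1, (ha.2 ξ).2.trans ?_⟩⟩ <;> gcongr

theorem memSdelta.sum_mul_le_of_quadratic_le (hδ : 0 ≤ δ) (ha : memSdelta δ a) (hs : 0 ≤ s)
    (hmn : ∀ ξ : E d,
      ∑ i, ∑ j, m i j * ξ i * ξ j ≤ (∑ i, ∑ j, n i j * ξ i * ξ j) + s * ‖ξ‖ ^ 2) :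
    ∑ i, ∑ j, a i j * m i j ≤ (∑ i, ∑ j, a i j * n i j) + s * (d * δ⁻¹) := by
  obtain ⟨e, he⟩ := ha.exists_eq_sum_mul hδ
  have hframe (q : Fin d → Fin d → ℝ) :
      ∑ i, ∑ j, a i j * q i j = ∑ k, ∑ i, ∑ j, q i j * e k i * e k j := by
    simp_rw [he, Finset.sum_mul]
    rw [Finset.sum_comm_cycle]
    refine Finset.sum_congr rfl fun k _ => ?_
    exact Finset.sum_congr rfl fun i _ => Finset.sum_congr rfl fun j _ => by ring
  have htrace : ∑ k, ‖e k‖ ^ 2 ≤ d * δ⁻¹ := by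
    calc ∑ k, ‖e k‖ ^ 2 = ∑ i, a i i := by
          simp_rw [EuclideanSpace.real_norm_sq_eq, he, ← sq]
          exact Finset.sum_comm
      _ ≤ ∑ _i : Fin d, δ⁻¹ := Finset.sum_le_sum fun i _ => ha.diag_le i
      _ = d * δ⁻¹ := by simp
  calc ∑ i, ∑ j, a i j * m i j
      ≤ ∑ k, ((∑ i, ∑ j, n i j * e k i * e k j) + s * ‖e k‖ ^ 2) := by
        rw [hframe]
        exact Finset.sum_le_sum fun k _ => hmn (e k)
    _ = (∑ i, ∑ j, a i j * n i j) + s * ∑ k, ‖e k‖ ^ 2 := by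
        rw [hframe, Finset.sum_add_distrib, Finset.mul_sum]
    _ ≤ (∑ i, ∑ j, a i j * n i j) + s * (d * δ⁻¹) := by gcongr

theorem memSdelta.sum_mul_le_of_quadratic_le_sub (hδ : 0 ≤ δ) (ha : memSdelta δ a)
    (hs : 0 ≤ s) (ht : 0 ≤ t) {y : E d}
    (hm : ∀ ξ : E d,
      ∑ i, ∑ j, m i j * ξ i * ξ j ≤ s * ‖ξ‖ ^ 2 - t * inner ℝ y ξ ^ 2) :
    ∑ i, ∑ j, a i j * m i j ≤ s * (d * δ⁻¹) - t * (δ * ‖y‖ ^ 2) := by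
  have hrank (ξ : E d) : ∑ i, ∑ j, -t * (y i * y j) * ξ i * ξ j = -t * inner ℝ y ξ ^ 2 := by
    simp only [PiLp.inner_apply, RCLike.inner_apply, conj_trivial]
    rw [sq, Finset.sum_mul_sum]
    simp only [Finset.mul_sum]
    exact Finset.sum_congr rfl fun i _ => Finset.sum_congr rfl fun j _ => by ring
  have hle := ha.sum_mul_le_of_quadratic_le hδ hs (m := m) (n := fun i j => -t * (y i * y j))
    fun ξ => by linarith [hm ξ, hrank ξ]
  have hlower : δ * ‖y‖ ^ 2 ≤ ∑ i, ∑ j, a i j * y i * y j := by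
    rw [EuclideanSpace.real_norm_sq_eq]
    exact (ha.2 y).1
  have hfactor : ∑ i, ∑ j, a i j * (-t * (y i * y j)) = -t * ∑ i, ∑ j, a i j * y i * y j := by
    simp only [Finset.mul_sum]
    exact Finset.sum_congr rfl fun i _ => Finset.sum_congr rfl fun j _ => by ring
  linarith [mul_le_mul_of_nonneg_left hlower ht]

theorem vecNorm_eq_norm_toLp (b : Fin d → ℝ) : vecNorm b = ‖(WithLp.toLp 2 b : E d)‖ := by
  simp [vecNorm, EuclideanSpace.norm_eq]

/-- The operator `a_{ij} D_{ij} + b_i D_i - c` evaluated on a 2-jet: `m`, `v`, `s` stand for the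
Hessian, the gradient and the value of a function at a point. -/
def jetOp (a : Fin d → Fin d → ℝ) (b : Fin d → ℝ) (c : ℝ) (m : Fin d → Fin d → ℝ)
    (v : Fin d → ℝ) (s : ℝ) : ℝ :=
  (∑ i, ∑ j, a i j * m i j) + (∑ i, b i * v i) - c * s

/-- Coefficients, at one point, of the linear operators with ellipticity constant `δ`, lower
order coefficients bounded by `K`, and a zeroth order term of the sign required by the maximum
principle. -/
structure IsElliptic (δ K : ℝ) (a : Fin d → Fin d → ℝ) (b : Fin d → ℝ) (c : ℝ) : Prop where
  memSdelta : memSdelta δ a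
  vecNorm_le : vecNorm b ≤ K
  nonneg : 0 ≤ c
  le : c ≤ K

/-- The maximal (Pucci) operator of the class `IsElliptic δ K` is at most `t` on the jet
`(m, v, s)`. This is stated as an upper bound, so that no supremum has to be known finite. -/
def PucciLE (δ K t : ℝ) (m : Fin d → Fin d → ℝ) (v : Fin d → ℝ) (s : ℝ) : Prop :=
  ∀ a b c, IsElliptic δ K a b c → jetOp a b c m v s ≤ t

theorem IsElliptic.mono {δ' K' : ℝ} (hδ' : 0 < δ') (hδ : δ' ≤ δ) (hK : K ≤ K')
    (h : IsElliptic δ K a b c) : IsElliptic δ' K' a b c :=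
  ⟨h.memSdelta.mono hδ' hδ, h.vecNorm_le.trans hK, h.nonneg, h.le.trans hK⟩

theorem exists_pucciLE (hδ : 0 ≤ δ) (m : Fin d → Fin d → ℝ) (v : Fin d → ℝ) (s : ℝ) :
    ∃ t, PucciLE δ K t m v s := by
  refine ⟨(∑ i, ∑ j, |m i j|) * (d * δ⁻¹) + K * vecNorm v + K * |s|, fun a b c h => ?_⟩
  have hquad (ξ : E d) :
      ∑ i, ∑ j, m i j * ξ i * ξ j ≤ (∑ i, ∑ j, |m i j|) * ‖ξ‖ ^ 2 := by
    simp only [Finset.sum_mul]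
    refine Finset.sum_le_sum fun i _ => Finset.sum_le_sum fun j _ => ?_
    calc m i j * ξ i * ξ j ≤ |m i j| * |ξ i| * |ξ j| := by
          rw [← abs_mul, ← abs_mul]
          exact le_abs_self _
      _ ≤ |m i j| * ‖ξ‖ * ‖ξ‖ := by
          gcongr
          exacts [PiLp.norm_apply_le ξ i, PiLp.norm_apply_le ξ j]
      _ = |m i j| * ‖ξ‖ ^ 2 := by ring
  have hsecond : ∑ i, ∑ j, a i j * m i j ≤ (∑ i, ∑ j, |m i j|) * (d * δ⁻¹) := by
    simpa using h.memSdelta.sum_mul_le_of_quadratic_le_sub hδ (t := 0) (y := 0)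
      (by positivity) le_rfl fun ξ => by simpa using hquad ξ
  have hfirst : ∑ i, b i * v i ≤ K * vecNorm v :=
    (Real.sum_mul_le_sqrt_mul_sqrt _ b v).trans
      (mul_le_mul_of_nonneg_right h.vecNorm_le (Real.sqrt_nonneg _))
  have hzeroth : -(c * s) ≤ K * |s| := by
    calc -(c * s) = c * -s := by ring
      _ ≤ c * |s| := mul_le_mul_of_nonneg_left (neg_le_abs s) h.nonneg
      _ ≤ K * |s| := mul_le_mul_of_nonneg_right h.le (abs_nonneg s)
  unfold jetOp
  linarith

end Ellipticity

section Hessian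

variable {d : ℕ} {u : E d → ℝ} {x : E d}

theorem sum_mul_D1 (u : E d → ℝ) (x : E d) (b : Fin d → ℝ) :
    ∑ i, b i * D1 u x i = fderiv ℝ u x (WithLp.toLp 2 b) := by
  have hb : (WithLp.toLp 2 b : E d) = ∑ i, b i • EuclideanSpace.single i (1 : ℝ) := by
    ext k
    simp [Pi.single_apply]
  simp [hb, D1, map_sum]

theorem sum_D2_mul_mul (hu : DifferentiableAt ℝ (fderiv ℝ u) x) (ξ : E d) :
    ∑ i, ∑ j, D2 u x i j * ξ i * ξ j = fderiv ℝ (fderiv ℝ u) x ξ ξ := by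
  have hD2 (i j : Fin d) : D2 u x i j =
      fderiv ℝ (fderiv ℝ u) x (EuclideanSpace.single i 1) (EuclideanSpace.single j 1) := by
    unfold D2
    rw [(hu.hasFDerivAt.clm_apply (hasFDerivAt_const _ x)).fderiv]
    simp
  have hξ : ξ = ∑ i, ξ i • EuclideanSpace.single i (1 : ℝ) := by
    ext k
    simp [Pi.single_apply]
  conv_rhs => rw [hξ]
  simp only [map_sum, map_smul, sum_apply, smul_apply, smul_eq_mul, hD2,
    Finset.mul_sum]
  rw [Finset.sum_comm]
  exact Finset.sum_congr rfl fun i _ => Finset.sum_congr rfl fun j _ => by ring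

theorem D1_neg (u : E d → ℝ) (x : E d) : D1 (fun y => -u y) x = -D1 u x := by
  ext i
  simp [D1]

theorem D2_neg (u : E d → ℝ) (x : E d) : D2 (fun y => -u y) x = -D2 u x := by
  ext i j
  simp [D2]

end Hessian

section Barrier

variable {V : Type*} [NormedAddCommGroup V] {N l r R : ℝ} {x z : V}

/-- The exponential barrier: for large `l` it is a strict supersolution of every elliptic
equation of a given class on an annulus around `z`, and it vanishes on the sphere of radius `r`
centred at `z`. -/
def barrier (N l r : ℝ) (z x : V) : ℝ :=
  N * (Real.exp (-l * r ^ 2) - Real.exp (-l * ‖x - z‖ ^ 2))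

theorem barrier_nonneg (hN : 0 ≤ N) (hl : 0 ≤ l) (hr : 0 ≤ r) (hx : r ≤ ‖x - z‖) :
    0 ≤ barrier N l r z x := by
  refine mul_nonneg hN (sub_nonneg.2 (Real.exp_le_exp.2 ?_))
  rw [neg_mul, neg_mul, neg_le_neg_iff]
  gcongr

theorem barrier_le (hN : 0 ≤ N) (hl : 0 ≤ l) (hr : 0 ≤ r) (hx : r ≤ ‖x - z‖) :
    barrier N l r z x ≤ N * (l * (‖x - z‖ ^ 2 - r ^ 2)) := by
  have hnonneg : 0 ≤ l * (‖x - z‖ ^ 2 - r ^ 2) :=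
    mul_nonneg hl (sub_nonneg.2 (pow_le_pow_left₀ hr hx 2))
  refine mul_le_mul_of_nonneg_left ?_ hN
  calc Real.exp (-l * r ^ 2) - Real.exp (-l * ‖x - z‖ ^ 2)
      = Real.exp (-l * r ^ 2) * (1 - Real.exp (-(l * (‖x - z‖ ^ 2 - r ^ 2)))) := by
        rw [mul_sub, ← Real.exp_add]
        ring_nf
    _ ≤ 1 * (l * (‖x - z‖ ^ 2 - r ^ 2)) := by
        gcongr
        · rw [sub_nonneg, Real.exp_le_one_iff]
          linarith
        · rw [Real.exp_le_one_iff]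
          nlinarith [sq_nonneg r]
        · linarith [Real.add_one_le_exp (-(l * (‖x - z‖ ^ 2 - r ^ 2)))]
    _ = l * (‖x - z‖ ^ 2 - r ^ 2) := one_mul _

variable [InnerProductSpace ℝ V]

theorem contDiff_barrier {n : WithTop ℕ∞} (N l r : ℝ) (z : V) :
    ContDiff ℝ n (barrier N l r z) :=
  contDiff_const.mul <| contDiff_const.sub
    (contDiff_const.mul ((contDiff_id.sub contDiff_const).norm_sq ℝ)).exp

theorem hasFDerivAt_exp_neg_mul_norm_sub_sq (l : ℝ) (z x : V) :
    HasFDerivAt (fun y : V => Real.exp (-l * ‖y - z‖ ^ 2))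
      (-(2 * l * Real.exp (-l * ‖x - z‖ ^ 2)) • innerSL ℝ (x - z)) x := by
  have hsq : HasFDerivAt (fun y : V => ‖y - z‖ ^ 2) (2 • innerSL ℝ (x - z)) x :=
    ((hasFDerivAt_id x).sub_const z).norm_sq
  refine (hsq.const_mul (-l)).exp.congr_fderiv ?_
  ext ξ
  simp only [smul_apply, innerSL_apply_apply, smul_eq_mul, nsmul_eq_mul, Nat.cast_ofNat]
  ring

theorem fderiv_barrier (N l r : ℝ) (z x : V) : fderiv ℝ (barrier N l r z) x =
    (N * (2 * l) * Real.exp (-l * ‖x - z‖ ^ 2)) • innerSL ℝ (x - z) := by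
  have hderiv := ((hasFDerivAt_exp_neg_mul_norm_sub_sq l z x).const_sub
    (Real.exp (-l * r ^ 2))).const_mul N
  refine HasFDerivAt.fderiv (hderiv.congr_fderiv ?_)
  rw [neg_smul, neg_neg, smul_smul, ← mul_assoc, ← mul_assoc]

theorem fderiv_fderiv_barrier_apply_self (N l r : ℝ) (z x ξ : V) :
    fderiv ℝ (fderiv ℝ (barrier N l r z)) x ξ ξ = N * (2 * l) * Real.exp (-l * ‖x - z‖ ^ 2) *
      (‖ξ‖ ^ 2 - 2 * l * inner ℝ (x - z) ξ ^ 2) := by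
  have hinner : HasFDerivAt (fun y : V => innerSL ℝ (y - z)) (innerSL ℝ : V →L[ℝ] V →L[ℝ] ℝ) x :=
    (innerSL ℝ : V →L[ℝ] V →L[ℝ] ℝ).hasFDerivAt.comp x ((hasFDerivAt_id x).sub_const z)
  have hderiv := ((hasFDerivAt_exp_neg_mul_norm_sub_sq l z x).const_mul (N * (2 * l))).smul hinner
  have heq : fderiv ℝ (barrier N l r z) =
      (fun y => N * (2 * l) * Real.exp (-l * ‖y - z‖ ^ 2)) • fun y => innerSL ℝ (y - z) :=
    funext (fderiv_barrier N l r z)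
  have hself : (innerSL ℝ : V →L[ℝ] V →L[ℝ] ℝ) ξ ξ = ‖ξ‖ ^ 2 := real_inner_self_eq_norm_sq ξ
  rw [heq, hderiv.fderiv]
  simp only [add_apply, smul_apply, ContinuousLinearMap.smulRight_apply, hself,
    innerSL_apply_apply, smul_eq_mul]
  ring

theorem IsElliptic.jetOp_barrier_le {d : ℕ} {δ K : ℝ} {a : Fin d → Fin d → ℝ} {b : Fin d → ℝ}
    {c : ℝ} {x z : E d} (h : IsElliptic δ K a b c) (hδ : 0 ≤ δ) (hN : 0 ≤ N) (hl : 0 ≤ l)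
    (hr : 0 ≤ r) (hrx : r ≤ ‖x - z‖) (hxR : ‖x - z‖ ≤ R)
    (hlarge : d * δ⁻¹ + K * R + 1 ≤ 2 * l * (δ * r ^ 2)) :
    jetOp a b c (D2 (barrier N l r z) x) (D1 (barrier N l r z) x) (barrier N l r z x) ≤
      -(N * (2 * l) * Real.exp (-l * R ^ 2)) := by
  set A := N * (2 * l) * Real.exp (-l * ‖x - z‖ ^ 2) with hA
  have hApos : 0 ≤ A := by positivity
  have hsecond : ∑ i, ∑ j, a i j * D2 (barrier N l r z) x i j ≤
      A * (d * δ⁻¹) - A * (2 * l) * (δ * ‖x - z‖ ^ 2) := by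
    refine h.memSdelta.sum_mul_le_of_quadratic_le_sub hδ hApos (by positivity) fun ξ => ?_
    rw [sum_D2_mul_mul, fderiv_fderiv_barrier_apply_self, ← hA]
    · exact le_of_eq (by ring)
    · exact ((contDiff_barrier N l r z).fderiv_right le_rfl).differentiable one_ne_zero x
  have hfirst : ∑ i, b i * D1 (barrier N l r z) x i ≤ A * (K * R) := by
    rw [sum_mul_D1, fderiv_barrier, ← hA]
    refine mul_le_mul_of_nonneg_left ?_ hApos
    refine (real_inner_le_norm (x - z) (WithLp.toLp 2 b)).trans ?_
    rw [← vecNorm_eq_norm_toLp b, mul_comm]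
    exact mul_le_mul h.vecNorm_le hxR (norm_nonneg _) ((Real.sqrt_nonneg _).trans h.vecNorm_le)
  have hzeroth : 0 ≤ c * barrier N l r z x := mul_nonneg h.nonneg (barrier_nonneg hN hl hr hrx)
  have hradius : 2 * l * (δ * r ^ 2) ≤ 2 * l * (δ * ‖x - z‖ ^ 2) := by gcongr
  have hexp : N * (2 * l) * Real.exp (-l * R ^ 2) ≤ A := by
    rw [hA]
    gcongr N * (2 * l) * Real.exp ?_
    rw [neg_mul, neg_mul, neg_le_neg_iff]
    gcongr
  unfold jetOp
  linarith [mul_le_mul_of_nonneg_left (hlarge.trans hradius) hApos]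

end Barrier

section C11Bound

variable {d : ℕ} {K₀ : ℝ} {g : E d → ℝ}

theorem C11Bound.nonneg (hg : C11Bound K₀ g) : 0 ≤ K₀ := (abs_nonneg _).trans (hg.2.1 0)

theorem C11Bound.neg (hg : C11Bound K₀ g) : C11Bound K₀ (fun y => -g y) := by
  refine ⟨hg.1.fun_neg, fun x => (abs_neg (g x)).trans_le (hg.2.1 x), fun x y => ?_, fun x y => ?_⟩
  · rw [neg_sub_neg, abs_sub_comm]
    exact hg.2.2.1 x y
  · rw [fderiv_fun_neg, fderiv_fun_neg, neg_sub_neg, norm_sub_rev]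
    exact hg.2.2.2 x y

theorem C11Bound.norm_fderiv_le (hg : C11Bound K₀ g) (x : E d) : ‖fderiv ℝ g x‖ ≤ K₀ := by
  have hlip : LipschitzWith K₀.toNNReal g := .of_dist_le' fun y z => by
    rw [Real.dist_eq, dist_eq_norm]
    exact hg.2.2.1 y z
  simpa [hg.nonneg] using norm_fderiv_le_of_lipschitz ℝ hlip (x₀ := x)

theorem C11Bound.lipschitzWith_fderiv (hg : C11Bound K₀ g) :
    LipschitzWith K₀.toNNReal (fderiv ℝ g) :=
  .of_dist_le' fun y z => by
    rw [dist_eq_norm, dist_eq_norm]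
    exact hg.2.2.2 y z

theorem C11Bound.le_add_fderiv_add (hg : C11Bound K₀ g) (x y : E d) :
    g y ≤ g x + fderiv ℝ g x (y - x) + K₀ * ‖y - x‖ ^ 2 := by
  have htaylor := norm_sub_sub_fderiv_le_of_lipschitzOnWith convex_univ (fun z _ => hg.1 z)
    hg.lipschitzWith_fderiv.lipschitzOnWith (mem_univ x) (mem_univ y)
  rw [Real.coe_toNNReal _ hg.nonneg] at htaylor
  linarith [(le_abs_self _).trans htaylor]

variable {u Φ : E d → ℝ} {x : E d} {κ : E d →L[ℝ] ℝ}

theorem C11Bound.sum_D2_mul_mul_le_of_affine_contact (hg : C11Bound K₀ g) (hΦ : ContDiff ℝ 2 Φ)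
    (hu : ∀ᶠ y in 𝓝 x, DifferentiableAt ℝ u y) (hu₂ : DifferentiableAt ℝ (fderiv ℝ u) x)
    (hcontact : ∀ᶠ y in 𝓝 x, u y - g y - Φ y ≤ u x - g x - Φ x + κ (y - x)) (ξ : E d) :
    ∑ i, ∑ j, D2 u x i j * ξ i * ξ j ≤
      (∑ i, ∑ j, D2 Φ x i j * ξ i * ξ j) + 2 * K₀ * ‖ξ‖ ^ 2 := by
  have hΦ₁ : Differentiable ℝ Φ := hΦ.differentiable two_ne_zero
  have hΦ₂ : DifferentiableAt ℝ (fderiv ℝ Φ) x :=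
    (hΦ.fderiv_right le_rfl).differentiable one_ne_zero x
  have hfderiv : fderiv ℝ (fun y => u y - Φ y) =ᶠ[𝓝 x] fderiv ℝ u - fderiv ℝ Φ := by
    filter_upwards [hu] with y hy using fderiv_fun_sub hy (hΦ₁ y)
  have hle : ∀ᶠ y in 𝓝 x, u y - Φ y ≤
      u x - Φ x + (κ + fderiv ℝ g x) (y - x) + K₀ * ‖y - x‖ ^ 2 := by
    filter_upwards [hcontact] with y hy
    rw [add_apply]
    linarith [hg.le_add_fderiv_add x y]
  have hquad := fderiv_fderiv_apply_self_le_of_eventually_le (φ := fun y => u y - Φ y)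
    (hu.mono fun y hy => hy.fun_sub (hΦ₁ y)) ((hu₂.sub hΦ₂).congr_of_eventuallyEq hfderiv) hle ξ
  rw [hfderiv.fderiv_eq, fderiv_sub hu₂ hΦ₂, sub_apply, sub_apply] at hquad
  rw [sum_D2_mul_mul hu₂, sum_D2_mul_mul hΦ₂]
  linarith

theorem C11Bound.norm_fderiv_sub_le_of_affine_contact (hg : C11Bound K₀ g)
    (hΦ : DifferentiableAt ℝ Φ x) (hu : DifferentiableAt ℝ u x)
    (hcontact : ∀ᶠ y in 𝓝 x, u y - g y - Φ y ≤ u x - g x - Φ x + κ (y - x)) :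
    ‖fderiv ℝ u x - fderiv ℝ Φ x‖ ≤ ‖κ‖ + K₀ := by
  have hug := hu.fun_sub (hg.1 x)
  have hderiv : fderiv ℝ u x - fderiv ℝ Φ x - fderiv ℝ g x = κ := by
    rw [sub_right_comm, ← fderiv_fun_sub hu (hg.1 x), ← fderiv_fun_sub hug hΦ]
    exact fderiv_eq_of_affine_contact (hug.fun_sub hΦ) hcontact
  rw [sub_eq_iff_eq_add.1 hderiv]
  exact norm_add_le_of_le le_rfl (hg.norm_fderiv_le x)

theorem IsElliptic.jetOp_le_of_affine_contact {δ K : ℝ} {a : Fin d → Fin d → ℝ} {b : Fin d → ℝ}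
    {c : ℝ} (h : IsElliptic δ K a b c) (hδ : 0 ≤ δ) (hg : C11Bound K₀ g) (hΦ : ContDiff ℝ 2 Φ)
    (hu : ∀ᶠ y in 𝓝 x, DifferentiableAt ℝ u y) (hu₂ : DifferentiableAt ℝ (fderiv ℝ u) x)
    (hpos : 0 ≤ u x - g x - Φ x) (hκ : ‖κ‖ ≤ 1)
    (hcontact : ∀ᶠ y in 𝓝 x, u y - g y - Φ y ≤ u x - g x - Φ x + κ (y - x)) :
    jetOp a b c (D2 u x) (D1 u x) (u x) ≤ jetOp a b c (D2 Φ x) (D1 Φ x) (Φ x) +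
      (2 * K₀ * (d * δ⁻¹) + K * (2 * K₀ + 1)) := by
  have hsecond : ∑ i, ∑ j, a i j * D2 u x i j ≤
      (∑ i, ∑ j, a i j * D2 Φ x i j) + 2 * K₀ * (d * δ⁻¹) :=
    h.memSdelta.sum_mul_le_of_quadratic_le hδ (by linarith [hg.nonneg])
      (hg.sum_D2_mul_mul_le_of_affine_contact hΦ hu hu₂ hcontact)
  have hfirst : ∑ i, b i * D1 u x i ≤ (∑ i, b i * D1 Φ x i) + K * (1 + K₀) := by
    have hnorm : ‖fderiv ℝ u x - fderiv ℝ Φ x‖ ≤ 1 + K₀ :=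
      (hg.norm_fderiv_sub_le_of_affine_contact (hΦ.differentiable two_ne_zero x) hu.self_of_nhds
        hcontact).trans (by gcongr)
    rw [sum_mul_D1, sum_mul_D1, ← sub_le_iff_le_add', ← sub_apply, mul_comm]
    refine (le_abs_self _).trans (ContinuousLinearMap.le_of_opNorm_le_of_le _ hnorm ?_)
    exact (vecNorm_eq_norm_toLp b).symm.trans_le h.vecNorm_le
  have hzeroth : -(c * u x) ≤ -(c * Φ x) + K * K₀ := by
    have hlower : -K₀ ≤ u x - Φ x := by linarith [(abs_le.1 (hg.2.1 x)).1]
    have hcK : c * K₀ ≤ K * K₀ := mul_le_mul_of_nonneg_right h.le hg.nonneg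
    linarith [mul_le_mul_of_nonneg_left hlower h.nonneg]
  unfold jetOp
  linarith

end C11Bound

section ExteriorBall

variable {V : Type*} [NormedAddCommGroup V]

/-- The uniform exterior ball condition: balls of one fixed radius touch `G` from outside at
every boundary point. -/
def UniformExteriorBall (G : Set V) : Prop :=
  ∃ r > 0, ∀ y ∈ frontier G, ∃ z, ‖y - z‖ = r ∧ ∀ x ∈ G, r ≤ ‖x - z‖

variable [InnerProductSpace ℝ V]

theorem le_norm_sub_smul_of_inner_le {p v : V} {M r : ℝ} (hp : p ≠ 0) (hr : 0 ≤ r)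
    (hM : 2 * r * M ≤ ‖p‖) (hv : inner ℝ v p ≤ M * ‖v‖ ^ 2) : r ≤ ‖v - (r / ‖p‖) • p‖ := by
  have hp' : 0 < ‖p‖ := norm_pos_iff.2 hp
  have hcoef : 2 * (r / ‖p‖) * M ≤ 1 := by
    calc 2 * (r / ‖p‖) * M = 2 * r * M / ‖p‖ := by ring
      _ ≤ 1 := (div_le_one hp').2 hM
  have hinner : 2 * (r / ‖p‖ * inner ℝ v p) ≤ ‖v‖ ^ 2 := by
    calc 2 * (r / ‖p‖ * inner ℝ v p) ≤ 2 * (r / ‖p‖ * (M * ‖v‖ ^ 2)) := by gcongr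
      _ = 2 * (r / ‖p‖) * M * ‖v‖ ^ 2 := by ring
      _ ≤ 1 * ‖v‖ ^ 2 := by gcongr
      _ = ‖v‖ ^ 2 := one_mul _
  have hradius : ‖(r / ‖p‖) • p‖ = r := by
    rw [norm_smul, Real.norm_of_nonneg (by positivity), div_mul_cancel₀ _ hp'.ne']
  refine le_of_sq_le_sq ?_ (norm_nonneg _)
  rw [norm_sub_sq_real, inner_smul_right, hradius]
  linarith

theorem exists_exteriorBall_of_inner_le {G : Set V} {y p : V} {M r : ℝ} (hp : p ≠ 0) (hr : 0 ≤ r)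
    (hM : 2 * r * M ≤ ‖p‖) (hG : ∀ x ∈ G, inner ℝ (x - y) p ≤ M * ‖x - y‖ ^ 2) :
    ∃ z, ‖y - z‖ = r ∧ ∀ x ∈ G, r ≤ ‖x - z‖ := by
  refine ⟨y + (r / ‖p‖) • p, ?_, fun x hx => ?_⟩
  · rw [sub_add_cancel_left, norm_neg, norm_smul, Real.norm_of_nonneg (by positivity),
      div_mul_cancel₀ _ (norm_ne_zero_iff.2 hp)]
  · rw [← sub_sub]
    exact le_norm_sub_smul_of_inner_le hp hr hM (hG x hx)

-- The radius comes from a lower bound of `‖Dρ‖` on the boundary and a Lipschitz constant of `Dρ`.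
theorem uniformExteriorBall_setOf_neg [FiniteDimensional ℝ V] {ρ : V → ℝ} (hρ : ContDiff ℝ 2 ρ)
    (hbdd : Bornology.IsBounded {x | ρ x < 0})
    (hgrad : ∀ x ∈ frontier {x | ρ x < 0}, fderiv ℝ ρ x ≠ 0) :
    UniformExteriorBall {x | ρ x < 0} := by
  have := FiniteDimensional.proper ℝ V
  have hρ₁ : ContDiff ℝ 1 (fderiv ℝ ρ) := hρ.fderiv_right le_rfl
  have hfrontier : IsCompact (frontier {x | ρ x < 0}) :=
    hbdd.isCompact_closure.of_isClosed_subset isClosed_frontier frontier_subset_closure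
  obtain ⟨m, hm, hmgrad⟩ := hfrontier.exists_forall_le' (a := 0) hρ₁.continuous.norm.continuousOn
    fun y hy => norm_pos_iff.2 (hgrad y hy)
  obtain ⟨R, hR⟩ := hbdd.closure.subset_closedBall 0
  obtain ⟨M, hM⟩ := hρ₁.contDiffOn.exists_lipschitzOnWith one_ne_zero
    (convex_closedBall 0 R) (isCompact_closedBall 0 R)
  refine ⟨m / (2 * (M + 1)), by positivity, fun y hy => ?_⟩
  set p := (InnerProductSpace.toDual ℝ V).symm (fderiv ℝ ρ y)
  have hp : ‖p‖ = ‖fderiv ℝ ρ y‖ := LinearIsometryEquiv.norm_map _ _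
  have hradius : 2 * (m / (2 * (M + 1))) * M ≤ ‖p‖ := by
    calc 2 * (m / (2 * (M + 1))) * (M : ℝ) ≤ 2 * (m / (2 * (M + 1))) * (M + 1) := by
          gcongr
          linarith
      _ = m := by field_simp
      _ ≤ ‖p‖ := hp ▸ hmgrad y hy
  refine exists_exteriorBall_of_inner_le (norm_ne_zero_iff.1 ?_) (by positivity) hradius ?_
  · exact hp ▸ (hm.trans_le (hmgrad y hy)).ne'
  · intro x hx
    have htaylor := norm_sub_sub_fderiv_le_of_lipschitzOnWith (convex_closedBall 0 R)
      (fun z _ => hρ.differentiable two_ne_zero z) hM (hR (frontier_subset_closure hy))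
      (hR (subset_closure hx))
    have hinner : inner ℝ (x - y) p = fderiv ℝ ρ y (x - y) := by
      rw [real_inner_comm]
      exact InnerProductSpace.toDual_symm_apply
    have hy₀ : ρ y = 0 := frontier_lt_subset_eq hρ.continuous continuous_const hy
    linarith [(abs_le.1 htaylor).1, show ρ x < 0 from hx]

theorem IsC2Domain.uniformExteriorBall {d : ℕ} {G : Set (E d)} (hG : IsC2Domain G) :
    UniformExteriorBall G := by
  obtain ⟨-, hbdd, -, -, ρ, hρ, rfl, hgrad⟩ := hG
  exact uniformExteriorBall_setOf_neg hρ hbdd hgrad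

end ExteriorBall

section Subsolutions

variable {d : ℕ} {δ K K₀ t : ℝ} {G : Set (E d)} {g u Φ : E d → ℝ}

/-- Almost everywhere subsolutions, of class `C^{1,1}_{loc}(G) ∩ C(Ḡ)` with boundary data `g`, of
`M[u] = -K₀`, where `M` is the maximal operator of the class `IsElliptic δ K`. -/
structure IsPucciSubsolution (δ K K₀ : ℝ) (G : Set (E d)) (g u : E d → ℝ) : Prop where
  continuousOn : ContinuousOn u (closure G)
  eqOn : EqOn u g (frontier G)
  differentiableOn : DifferentiableOn ℝ u G
  locallyLipschitzOn : LocallyLipschitzOn G (fderiv ℝ u)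
  neg_le : ∀ᵐ x, x ∈ G → ∀ t, PucciLE δ K t (D2 u x) (D1 u x) (u x) → -K₀ ≤ t

theorem locallyLipschitzOn_fderiv_sub {V W : Type*} [NormedAddCommGroup V] [NormedSpace ℝ V]
    [NormedAddCommGroup W] [NormedSpace ℝ W] {G : Set V} {u v : V → W} (hG : IsOpen G)
    (hud : DifferentiableOn ℝ u G) (hvd : DifferentiableOn ℝ v G)
    (hu : LocallyLipschitzOn G (fderiv ℝ u)) (hv : LocallyLipschitzOn G (fderiv ℝ v)) :
    LocallyLipschitzOn G (fderiv ℝ fun x => u x - v x) := by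
  have heq : EqOn (fderiv ℝ fun x => u x - v x) (fderiv ℝ u - fderiv ℝ v) G := fun x hx =>
    fderiv_fun_sub (hud.differentiableAt (hG.mem_nhds hx)) (hvd.differentiableAt (hG.mem_nhds hx))
  intro x hx
  obtain ⟨C, s, hs, hC⟩ := hu.sub hv hx
  refine ⟨C, s ∩ G, inter_mem hs self_mem_nhdsWithin, fun y hy z hz => ?_⟩
  rw [heq hy.2, heq hz.2]
  exact hC hy.1 hz.1

theorem IsPucciSubsolution.exists_affine_contact (hu : IsPucciSubsolution δ K K₀ G g u)
    (hG : IsOpen G) (hb : Bornology.IsBounded G) (hg : C11Bound K₀ g) (hΦ : ContDiff ℝ 2 Φ)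
    (hΦ₀ : ∀ x ∈ frontier G, 0 ≤ Φ x) {x₀ : E d} (hx₀ : x₀ ∈ G) (hlt : Φ x₀ < u x₀ - g x₀) :
    ∃ x ∈ G, ∃ κ : E d →L[ℝ] ℝ, DifferentiableAt ℝ (fderiv ℝ u) x ∧
      (∀ t, PucciLE δ K t (D2 u x) (D1 u x) (u x) → -K₀ ≤ t) ∧ 0 < u x - g x - Φ x ∧ ‖κ‖ ≤ 1 ∧
      ∀ y ∈ G, u y - g y - Φ y ≤ u x - g x - Φ x + κ (y - x) := by
  have hΦd : Differentiable ℝ Φ := hΦ.differentiable two_ne_zero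
  have hgood := hu.neg_le.and (ae_differentiableAt_of_locallyLipschitzOn volume hG
    hu.locallyLipschitzOn)
  have hΦl : LocallyLipschitzOn G (fderiv ℝ Φ) :=
    (hΦ.fderiv_right (m := 1) (by norm_num)).locallyLipschitz.locallyLipschitzOn
  have hgl : LocallyLipschitzOn G (fderiv ℝ g) :=
    hg.lipschitzWith_fderiv.locallyLipschitz.locallyLipschitzOn
  have hugd := hu.differentiableOn.fun_sub hg.1.differentiableOn
  obtain ⟨x, hx, hxgood, hpos, hκ, hcontact⟩ :=
    exists_affine_contact_notMem volume (w := fun x => u x - g x - Φ x) hG hb.isCompact_closure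
      ((hu.continuousOn.sub hg.1.continuous.continuousOn).sub hΦ.continuous.continuousOn)
      (fun x hx => by simpa [hu.eqOn hx] using hΦ₀ x hx)
      (hugd.fun_sub hΦd.differentiableOn)
      (locallyLipschitzOn_fderiv_sub hG hugd hΦd.differentiableOn
        (locallyLipschitzOn_fderiv_sub hG hu.differentiableOn hg.1.differentiableOn
          hu.locallyLipschitzOn hgl) hΦl)
      hx₀ (sub_pos.2 hlt) (ae_iff.1 hgood) one_pos
  have hxgood' := not_not.1 hxgood
  exact ⟨x, hx, _, hxgood'.2 hx, hxgood'.1 hx, hpos, hκ, hcontact⟩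

theorem IsPucciSubsolution.sub_le_of_pucciLE (hu : IsPucciSubsolution δ K K₀ G g u) (hδ : 0 ≤ δ)
    (hG : IsOpen G) (hb : Bornology.IsBounded G) (hg : C11Bound K₀ g) (hΦ : ContDiff ℝ 2 Φ)
    (hΦ₀ : ∀ x ∈ frontier G, 0 ≤ Φ x) (ht : t + (2 * K₀ * (d * δ⁻¹) + K * (2 * K₀ + 1)) < -K₀)
    (hΦt : ∀ x ∈ G, PucciLE δ K t (D2 Φ x) (D1 Φ x) (Φ x)) {x : E d} (hx : x ∈ G) :
    u x - g x ≤ Φ x := by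
  by_contra! hlt
  obtain ⟨y, hy, κ, hu₂, hneg_le, hpos, hκ, hcontact⟩ :=
    hu.exists_affine_contact hG hb hg hΦ hΦ₀ hx hlt
  have hGy : G ∈ 𝓝 y := hG.mem_nhds hy
  refine (hneg_le _ fun a b c h => ?_).not_gt ht
  exact (h.jetOp_le_of_affine_contact hδ hg hΦ
    (hu.differentiableOn.eventually_differentiableAt hGy) hu₂ hpos.le hκ
    (eventually_of_mem hGy hcontact)).trans (add_le_add_left (hΦt y hy a b c h) _)

theorem exists_pucciLE_barrier_constants (d : ℕ) (hδ : 0 < δ) (hK : 0 ≤ K) {M r R : ℝ}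
    (hM : 0 ≤ M) (hr : 0 < r) (hR : 0 ≤ R) :
    ∃ N l : ℝ, 0 ≤ N ∧ 0 ≤ l ∧ ∀ x z : E d, r ≤ ‖x - z‖ → ‖x - z‖ ≤ R →
      PucciLE δ K (-M) (D2 (barrier N l r z) x) (D1 (barrier N l r z) x) (barrier N l r z x) := by
  set l : ℝ := (d * δ⁻¹ + K * R + 1) / (2 * δ * r ^ 2) with hl
  have hl₀ : 0 < l := by positivity
  have hlarge : d * δ⁻¹ + K * R + 1 = 2 * l * (δ * r ^ 2) := by rw [hl]; field_simp
  set N : ℝ := M / (2 * l * Real.exp (-l * R ^ 2)) with hN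
  have hNM : N * (2 * l) * Real.exp (-l * R ^ 2) = M := by rw [hN]; field_simp
  have hN₀ : 0 ≤ N := by positivity
  refine ⟨N, l, hN₀, hl₀.le, fun x z hrx hxR a b c h => ?_⟩
  exact hNM ▸ h.jetOp_barrier_le hδ.le hN₀ hl₀.le hr.le hrx hxR hlarge.le

theorem UniformExteriorBall.exists_pucciLE_barrier (hext : UniformExteriorBall G)
    (hb : Bornology.IsBounded G) (hG : G ≠ univ) (hδ : 0 < δ) (hK : 0 ≤ K) {M : ℝ} (hM : 0 ≤ M) :
    ∃ N : ℝ, 0 ≤ N ∧ ∀ x₀ ∈ G, ∃ Φ : E d → ℝ, ContDiff ℝ 2 Φ ∧ (∀ x ∈ frontier G, 0 ≤ Φ x) ∧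
      (∀ x ∈ G, PucciLE δ K (-M) (D2 Φ x) (D1 Φ x) (Φ x)) ∧
      Φ x₀ ≤ N * Metric.infDist x₀ Gᶜ := by
  obtain ⟨r, hr, hball⟩ := hext
  set R : ℝ := Metric.diam (closure G) + r
  have hR : 0 ≤ R := add_nonneg Metric.diam_nonneg hr.le
  obtain ⟨N, l, hN, hl, hΦ⟩ := exists_pucciLE_barrier_constants d hδ hK hM hr hR
  refine ⟨N * (l * (2 * R)), by positivity, fun x₀ hx₀ => ?_⟩
  obtain ⟨y, hy, hyd⟩ := exists_mem_frontier_infDist_compl_eq_dist hx₀ hG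
  obtain ⟨z, hyz, hz⟩ := hball y hy
  have hrz : ∀ x ∈ closure G, r ≤ ‖x - z‖ :=
    closure_minimal hz (isClosed_le continuous_const (continuous_sub_right z).norm)
  have hzR : ∀ x ∈ closure G, ‖x - z‖ ≤ R := fun x hx => by
    have hdiam := Metric.dist_le_diam_of_mem hb.closure hx (frontier_subset_closure hy)
    rw [dist_eq_norm] at hdiam
    linarith [norm_sub_le_norm_sub_add_norm_sub x y z]
  refine ⟨barrier N l r z, contDiff_barrier N l r z,
    fun x hx => barrier_nonneg hN hl hr.le (hrz x (frontier_subset_closure hx)),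
    fun x hx => hΦ x z (hz x hx) (hzR x (subset_closure hx)), ?_⟩
  have hsq : ‖x₀ - z‖ ^ 2 - r ^ 2 ≤ 2 * R * ‖x₀ - y‖ := by
    nlinarith [norm_sub_le_norm_sub_add_norm_sub x₀ y z, hzR x₀ (subset_closure hx₀), hz x₀ hx₀,
      norm_nonneg (x₀ - y)]
  rw [hyd, dist_eq_norm]
  calc barrier N l r z x₀ ≤ N * (l * (‖x₀ - z‖ ^ 2 - r ^ 2)) := barrier_le hN hl hr.le (hz x₀ hx₀)
    _ ≤ N * (l * (2 * R * ‖x₀ - y‖)) := by gcongr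
    _ = N * (l * (2 * R)) * ‖x₀ - y‖ := by ring

theorem UniformExteriorBall.exists_sub_le_mul_infDist (hext : UniformExteriorBall G)
    (hGo : IsOpen G) (hb : Bornology.IsBounded G) (hG : G ≠ univ) (hδ : 0 < δ) (hK : 0 ≤ K)
    (hK₀ : 0 ≤ K₀) :
    ∃ N : ℝ, 0 ≤ N ∧ ∀ g u : E d → ℝ, C11Bound K₀ g → IsPucciSubsolution δ K K₀ G g u →
      ∀ x ∈ G, u x - g x ≤ N * Metric.infDist x Gᶜ := by
  obtain ⟨N, hN, hbarrier⟩ := hext.exists_pucciLE_barrier hb hG hδ hK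
    (M := 2 * K₀ * (d * δ⁻¹) + K * (2 * K₀ + 1) + K₀ + 1) (by positivity)
  refine ⟨N, hN, fun g u hg hu x hx => ?_⟩
  obtain ⟨Φ, hΦ, hΦ₀, hΦM, hΦx⟩ := hbarrier x hx
  exact (hu.sub_le_of_pucciLE hδ.le hGo hb hg hΦ hΦ₀ (by linarith) hΦM hx).trans hΦx

end Subsolutions

section Operators

variable {d : ℕ} {δ K K₀ t : ℝ} {G : Set (E d)} {g u : E d → ℝ} {x : E d}
  {P : (Fin d → Fin d → ℝ) → (Fin d → ℝ) → ℝ → ℝ}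

theorem clm_apply_jet (ℓ : (Fin d → Fin d → ℝ) × (Fin d → ℝ) × ℝ →L[ℝ] ℝ)
    (m : Fin d → Fin d → ℝ) (v : Fin d → ℝ) (s : ℝ) :
    ℓ (m, v, s) = jetOp (fun i j => ℓ (Pi.single i (Pi.single j 1), 0, 0))
      (fun i => ℓ (0, Pi.single i 1, 0)) (-ℓ (0, 0, 1)) m v s := by
  have hjet : (m, v, s) =
      (∑ i, ∑ j, m i j • ((Pi.single i (Pi.single j 1), 0, 0) :
        (Fin d → Fin d → ℝ) × (Fin d → ℝ) × ℝ)) +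
      (∑ i, v i • (0, Pi.single i 1, 0)) + s • (0, 0, 1) := by
    refine Prod.ext ?_ (Prod.ext ?_ ?_)
    · ext i j
      simp [Prod.fst_sum, Finset.sum_apply, Pi.single_apply]
    · ext i
      simp [Prod.fst_sum, Prod.snd_sum, Finset.sum_apply, Pi.single_apply]
    · simp [Prod.snd_sum]
  rw [hjet]
  simp only [jetOp, map_add, map_sum, map_smul, smul_eq_mul, mul_comm (ℓ _)]
  ring

theorem PAssump.le_of_pucciLE (hP : PAssump δ K P) {m : Fin d → Fin d → ℝ} {v : Fin d → ℝ} {s : ℝ}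
    (h : PucciLE δ K t m v s) : P m v s ≤ t := by
  obtain ⟨-, hhom, ⟨C, hC⟩, hderiv⟩ := hP
  refine le_of_forall_fderiv_apply_le_of_posHomogeneous (q := (m, v, s))
    (fun t ht q => hhom t ht _ _ _) hC fun p hp => ?_
  obtain ⟨ha, hb, hneg, hle⟩ := hderiv p hp
  rw [clm_apply_jet]
  exact h _ _ _ ⟨ha, hb, by linarith, by linarith⟩

theorem ciSup_ciInf_le {A B : Type*} [Nonempty A] [Nonempty B] {f : A → B → ℝ} {t : ℝ}
    (hbdd : ∀ α, BddBelow (range (f α))) (h : ∀ α β, f α β ≤ t) : ⨆ α, ⨅ β, f α β ≤ t :=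
  ciSup_le fun α => (ciInf_le (hbdd α) (Classical.arbitrary B)).trans (h α _)

theorem le_ciSup_ciInf {A B : Type*} [Nonempty A] [Nonempty B] {f : A → B → ℝ} {s t : ℝ}
    (hle : ∀ α β, f α β ≤ s) (h : ∀ α β, t ≤ f α β) : t ≤ ⨆ α, ⨅ β, f α β := by
  have hinf (α : A) : ⨅ β, f α β ≤ s :=
    (ciInf_le ⟨t, forall_mem_range.2 (h α)⟩ (Classical.arbitrary B)).trans (hle α _)
  exact (le_ciInf (h (Classical.arbitrary A))).trans
    (le_ciSup (f := fun α => ⨅ β, f α β) ⟨s, forall_mem_range.2 hinf⟩ _)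

theorem jetOp_neg (a : Fin d → Fin d → ℝ) (b : Fin d → ℝ) (c : ℝ) (m : Fin d → Fin d → ℝ)
    (v : Fin d → ℝ) (s : ℝ) : jetOp a b c (-m) (-v) (-s) = -jetOp a b c m v s := by
  simp only [jetOp, Pi.neg_apply, mul_neg, Finset.sum_neg_distrib]
  ring

theorem IsElliptic.neg_le_jetOp {a : Fin d → Fin d → ℝ} {b : Fin d → ℝ} {c : ℝ}
    (h : IsElliptic δ K a b c) {m : Fin d → Fin d → ℝ} {v : Fin d → ℝ} {s : ℝ}
    (ht : PucciLE δ K t (-m) (-v) (-s)) : -t ≤ jetOp a b c m v s := by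
  linarith [jetOp_neg a b c m v s, ht a b c h]

variable {A B : Type} [Nonempty A] [Nonempty B] {a : A → B → E d → Fin d → Fin d → ℝ}
  {b : A → B → E d → Fin d → ℝ} {c f : A → B → E d → ℝ}

theorem Fop_le_of_pucciLE (hδ : 0 ≤ δ)
    (hell : ∀ α β x, IsElliptic δ K (a α β x) (b α β x) (c α β x)) (hf : ∀ α β x, |f α β x| ≤ K₀)
    (ht : PucciLE δ K t (D2 u x) (D1 u x) (u x)) : Fop a b c f u x ≤ t + K₀ := by
  obtain ⟨s, hs⟩ := exists_pucciLE (K := K) hδ (-D2 u x) (-D1 u x) (-u x)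
  refine ciSup_ciInf_le (fun α => ⟨-s - K₀, forall_mem_range.2 fun β => ?_⟩) fun α β => ?_
  · exact add_le_add ((hell α β x).neg_le_jetOp hs) (abs_le.1 (hf α β x)).1
  · exact add_le_add (ht _ _ _ (hell α β x)) (abs_le.1 (hf α β x)).2

theorem neg_sub_le_Fop_of_pucciLE_neg (hδ : 0 ≤ δ)
    (hell : ∀ α β x, IsElliptic δ K (a α β x) (b α β x) (c α β x)) (hf : ∀ α β x, |f α β x| ≤ K₀)
    (ht : PucciLE δ K t (-D2 u x) (-D1 u x) (-u x)) : -t - K₀ ≤ Fop a b c f u x := by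
  obtain ⟨s, hs⟩ := exists_pucciLE (K := K) hδ (D2 u x) (D1 u x) (u x)
  refine le_ciSup_ciInf (s := s + K₀) (fun α β => ?_) fun α β => ?_
  · exact add_le_add (hs _ _ _ (hell α β x)) (abs_le.1 (hf α β x)).2
  · exact add_le_add ((hell α β x).neg_le_jetOp ht) (abs_le.1 (hf α β x)).1

end Operators

section Solutions

variable {d : ℕ} {δ K K₀ K' : ℝ} {G : Set (E d)} {g u : E d → ℝ}

theorem locallyLipschitzOn_of_forall_ball {X Y : Type*} [PseudoMetricSpace X]
    [PseudoMetricSpace Y] {G : Set X} {f : X → Y}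
    (h : ∀ x ∈ G, ∃ r : ℝ, 0 < r ∧ Metric.ball x r ⊆ G ∧
      ∃ C : ℝ≥0, LipschitzOnWith C f (Metric.ball x r)) : LocallyLipschitzOn G f := by
  intro x hx
  obtain ⟨r, hr, -, C, hC⟩ := h x hx
  exact ⟨C, _, mem_nhdsWithin_of_mem_nhds (Metric.ball_mem_nhds x hr), hC⟩

theorem isPucciSubsolution_neg_of_ae (hc : ContinuousOn u (closure G)) (heq : EqOn u g (frontier G))
    (hd : DifferentiableOn ℝ u G) (hl : LocallyLipschitzOn G (fderiv ℝ u))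
    (h : ∀ᵐ x, x ∈ G → ∀ t, PucciLE δ K t (-D2 u x) (-D1 u x) (-u x) → -K₀ ≤ t) :
    IsPucciSubsolution δ K K₀ G (fun y => -g y) (fun y => -u y) where
  continuousOn := hc.neg
  eqOn := heq.comp_left
  differentiableOn := hd.neg
  locallyLipschitzOn := by
    have hfderiv : fderiv ℝ (fun y => -u y) = -fderiv ℝ u := funext fun _ => fderiv_fun_neg
    exact hfderiv ▸ hl.neg
  neg_le := by simpa only [D1_neg, D2_neg] using h

variable {A B : Type} [Nonempty A] [Nonempty B] {a : A → B → E d → Fin d → Fin d → ℝ}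
  {b : A → B → E d → Fin d → ℝ} {c f : A → B → E d → ℝ}
  {P : (Fin d → Fin d → ℝ) → (Fin d → ℝ) → ℝ → ℝ}

theorem IsUSol.isPucciSubsolution (hu : IsUSol a b c f G g P K' u) (hδ : 0 ≤ δ)
    (hell : ∀ α β x, IsElliptic δ K (a α β x) (b α β x) (c α β x)) (hK₀ : 0 ≤ K₀)
    (hf : ∀ α β x, |f α β x| ≤ K₀) (hP : ∀ m v s t, PucciLE δ K t m v s → P m v s ≤ t)
    (hK' : 0 ≤ K') : IsPucciSubsolution δ K K₀ G g u := by
  obtain ⟨hc, heq, hd, hl, hsol⟩ := hu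
  refine ⟨hc, heq, hd, locallyLipschitzOn_of_forall_ball hl, hsol.mono fun x hx hxG t ht => ?_⟩
  have hFx : Fop a b c f u x ≤ t + K₀ := Fop_le_of_pucciLE hδ hell hf ht
  have hPx : Pop P u x ≤ t := hP _ _ _ _ ht
  by_contra! hlt
  exact (max_lt (by linarith) (by linarith)).ne (hx hxG)

theorem IsUSol.isPucciSubsolution_neg (hu : IsUSol a b c f G g P K' u) (hδ : 0 ≤ δ)
    (hell : ∀ α β x, IsElliptic δ K (a α β x) (b α β x) (c α β x))
    (hf : ∀ α β x, |f α β x| ≤ K₀) :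
    IsPucciSubsolution δ K K₀ G (fun y => -g y) (fun y => -u y) := by
  obtain ⟨hc, heq, hd, hl, hsol⟩ := hu
  refine isPucciSubsolution_neg_of_ae hc heq hd (locallyLipschitzOn_of_forall_ball hl)
    (hsol.mono fun x hx hxG t ht => ?_)
  have hFx : -t - K₀ ≤ Fop a b c f u x := neg_sub_le_Fop_of_pucciLE_neg hδ hell hf ht
  linarith [(le_max_left _ _).trans_eq (hx hxG)]

theorem IsVSol.isPucciSubsolution (hv : IsVSol a b c f G g P K' u) (hδ : 0 ≤ δ)
    (hell : ∀ α β x, IsElliptic δ K (a α β x) (b α β x) (c α β x))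
    (hf : ∀ α β x, |f α β x| ≤ K₀) : IsPucciSubsolution δ K K₀ G g u := by
  obtain ⟨hc, heq, hd, hl, hsol⟩ := hv
  refine ⟨hc, heq, hd, locallyLipschitzOn_of_forall_ball hl, hsol.mono fun x hx hxG t ht => ?_⟩
  have hFx : Fop a b c f u x ≤ t + K₀ := Fop_le_of_pucciLE hδ hell hf ht
  linarith [(hx hxG).symm.trans_le (min_le_left _ _)]

theorem IsVSol.isPucciSubsolution_neg (hv : IsVSol a b c f G g P K' u) (hδ : 0 ≤ δ)
    (hell : ∀ α β x, IsElliptic δ K (a α β x) (b α β x) (c α β x)) (hK₀ : 0 ≤ K₀)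
    (hf : ∀ α β x, |f α β x| ≤ K₀) (hP : ∀ m v s t, PucciLE δ K t m v s → P m v s ≤ t)
    (hK' : 0 ≤ K') : IsPucciSubsolution δ K K₀ G (fun y => -g y) (fun y => -u y) := by
  obtain ⟨hc, heq, hd, hl, hsol⟩ := hv
  refine isPucciSubsolution_neg_of_ae hc heq hd (locallyLipschitzOn_of_forall_ball hl)
    (hsol.mono fun x hx hxG t ht => ?_)
  have hFx : -t - K₀ ≤ Fop a b c f u x := neg_sub_le_Fop_of_pucciLE_neg hδ hell hf ht
  have hPx : Pop P (fun y => -u y) x ≤ t := hP _ _ _ _ (by simpa only [D1_neg, D2_neg] using ht)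
  by_contra! hlt
  exact (lt_min (by linarith) (by linarith)).ne' (hx hxG)

theorem UniformExteriorBall.exists_abs_sub_le_mul_infDist (hext : UniformExteriorBall G)
    (hGo : IsOpen G) (hb : Bornology.IsBounded G) (hG : G ≠ univ) (hδ : 0 < δ) (hK : 0 ≤ K)
    (hK₀ : 0 ≤ K₀) :
    ∃ N : ℝ, 0 ≤ N ∧ ∀ g u : E d → ℝ, C11Bound K₀ g → IsPucciSubsolution δ K K₀ G g u →
      IsPucciSubsolution δ K K₀ G (fun y => -g y) (fun y => -u y) →
      ∀ x ∈ G, |u x - g x| ≤ N * Metric.infDist x Gᶜ := by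
  obtain ⟨N, hN, hle⟩ := hext.exists_sub_le_mul_infDist hGo hb hG hδ hK hK₀
  refine ⟨N, hN, fun g u hg hsub hsub_neg x hx => abs_le.2 ⟨?_, hle g u hg hsub x hx⟩⟩
  linarith [hle _ _ hg.neg hsub_neg x hx]

theorem infDist_compl_le_diam_closure {V : Type*} [NormedAddCommGroup V] [NormedSpace ℝ V]
    [FiniteDimensional ℝ V] {G : Set V} (hb : Bornology.IsBounded G) (hG : G ≠ univ) {x : V}
    (hx : x ∈ G) : Metric.infDist x Gᶜ ≤ Metric.diam (closure G) := by
  obtain ⟨y, hy, hyd⟩ := exists_mem_frontier_infDist_compl_eq_dist hx hG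
  exact hyd.trans_le
    (Metric.dist_le_diam_of_mem hb.closure (subset_closure hx) (frontier_subset_closure hy))

end Solutions

theorem statement1_general {d : ℕ} {δ K K₀ : ℝ} {G : Set (E d)} (hδ : 0 < δ) (hK : 0 ≤ K)
    (hK₀ : 0 ≤ K₀) (hGo : IsOpen G) (hb : Bornology.IsBounded G) (hG : G ≠ univ)
    (hext : UniformExteriorBall G) :
    ∃ N : ℝ, 0 < N ∧ ∀ (A B : Type) [Nonempty A] [Nonempty B]
      (a : A → B → E d → Fin d → Fin d → ℝ) (b : A → B → E d → Fin d → ℝ)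
      (c f : A → B → E d → ℝ) (g : E d → ℝ) (P : (Fin d → Fin d → ℝ) → (Fin d → ℝ) → ℝ → ℝ),
      (∀ α β x, IsElliptic δ K (a α β x) (b α β x) (c α β x)) → (∀ α β x, |f α β x| ≤ K₀) →
      C11Bound K₀ g → (∀ m v s t, PucciLE δ K t m v s → P m v s ≤ t) →
      ∀ K' : ℝ, 0 ≤ K' → ∀ u v : E d → ℝ, IsUSol a b c f G g P K' u → IsVSol a b c f G g P K' v →
      ∀ x ∈ G, |u x - g x| + |v x - g x| ≤ N * Metric.infDist x Gᶜ ∧ |u x| + |v x| ≤ N := by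
  obtain ⟨N, hN, hle⟩ := hext.exists_abs_sub_le_mul_infDist hGo hb hG hδ hK hK₀
  refine ⟨2 * N + 2 * (N * Metric.diam (closure G) + K₀) + 1, by positivity, ?_⟩
  intro A B _ _ a b c f g P hell hf hg hP K' hK' u v hu hv x hx
  have huN : |u x - g x| ≤ N * Metric.infDist x Gᶜ :=
    hle g u hg (hu.isPucciSubsolution hδ.le hell hK₀ hf hP hK')
      (hu.isPucciSubsolution_neg hδ.le hell hf) x hx
  have hvN : |v x - g x| ≤ N * Metric.infDist x Gᶜ :=
    hle g v hg (hv.isPucciSubsolution hδ.le hell hf)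
      (hv.isPucciSubsolution_neg hδ.le hell hK₀ hf hP hK') x hx
  have hND : N * Metric.infDist x Gᶜ ≤ N * Metric.diam (closure G) :=
    mul_le_mul_of_nonneg_left (infDist_compl_le_diam_closure hb hG hx) hN
  have hrest : 0 ≤ (2 * (N * Metric.diam (closure G) + K₀) + 1) * Metric.infDist x Gᶜ :=
    mul_nonneg (by positivity) Metric.infDist_nonneg
  have hgx : |g x| ≤ K₀ := hg.2.1 x
  constructor
  · linarith
  · linarith [abs_sub_abs_le_abs_sub (u x) (g x), abs_sub_abs_le_abs_sub (v x) (g x)]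

/-- **Lemma 2.2.** There exists a constant `N`, depending only on `d, δ, K0`, and `G`,
such that in `G`: `|u_K - g| + |v_K - g| ≤ N ρ` and `|u_K| + |v_K| ≤ N`,
where `ρ(x) = dist(x, G^c)`. -/
theorem statement1 {d : ℕ} (δ K0 χ γ δhat K1 : ℝ) (G : Set (E d))
    (P : (Fin d → Fin d → ℝ) → (Fin d → ℝ) → ℝ → ℝ) :
    ∃ N : ℝ, 0 < N ∧
      ∀ (A B : Type) [MetricSpace A] [MetricSpace B],
      ∀ (ω : ℝ → ℝ) (a : A → B → E d → Fin d → Fin d → ℝ)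
        (b : A → B → E d → Fin d → ℝ) (c f : A → B → E d → ℝ) (g : E d → ℝ),
        Setting δ K0 χ γ δhat K1 ω a b c f G g P → ModulusAssump χ ω →
        ∀ K : ℝ, 0 ≤ K → ∀ uK vK : E d → ℝ,
          IsUSol a b c f G g P K uK → IsVSol a b c f G g P K vK →
          ∀ x ∈ G,
            |uK x - g x| + |vK x - g x| ≤ N * Metric.infDist x Gᶜ ∧
            |uK x| + |vK x| ≤ N := by
  by_cases hconst : 1 ≤ d ∧ 0 ≤ K0 ∧ 0 < δhat ∧ K0 ≤ K1 ∧ IsC2Domain G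
  · obtain ⟨hd, hK0, hδhat, hK1, hG⟩ := hconst
    have : Nonempty (Fin d) := ⟨⟨0, hd⟩⟩
    have hne : G ≠ univ := fun h => NormedSpace.unbounded_univ ℝ (E d) (h ▸ hG.2.1)
    obtain ⟨N, hN, hbound⟩ := statement1_general hδhat (hK0.trans hK1) hK0 hG.1 hG.2.1 hne
      hG.uniformExteriorBall
    refine ⟨N, hN, fun A B _ _ ω a b c f g hS _ => ?_⟩
    obtain ⟨-, -, -, -, -, -, -, -, hδ, -, hA, hB, -, -, hcoef, -, hg, hP⟩ := hS
    obtain ⟨ha, -, hb, hc, hf, -⟩ := hcoef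
    have hell (α : A) (β : B) (x : E d) : IsElliptic δhat K1 (a α β x) (b α β x) (c α β x) :=
      IsElliptic.mono hδhat hδ.le hK1 ⟨ha α β x, hb α β x, (hc α β x).1, (hc α β x).2⟩
    exact hbound A B a b c f g P hell hf hg fun _ _ _ _ => hP.le_of_pucciLE
  · refine ⟨1, one_pos, fun A B _ _ ω a b c f g hS => absurd ?_ hconst⟩
    obtain ⟨hd, -, -, hK0, -, -, -, hδhat, -, hK1, -, -, -, -, -, hG, -⟩ := hS
    exact ⟨hd, hK0, hδhat, hK1, hG⟩
end
end

section
/- For every ε ∈ (0,1] such that G_ε ≠ ∅ one has ‖w‖_{C^{1+χ}(G_ε)} ≤ N ε^{−1−χ}, where N is the constant from the interior C^{1+χ} estimate for u_K and v_K (depending only on K_0, δ, d, and G) and χ = χ(d,δ). -/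
noncomputable section

open MeasureTheory Set Filter Topology
open scoped ENNReal NNReal

/-! Along the family `u_K` the first-order Taylor remainder at `x` is at most `C ‖y - x‖ ^ (1 + χ)`,
uniformly in `K`. The gradients at `x` are bounded, hence relatively compact, and the Taylor bound
survives a passage to the limit along any ultrafilter along which they converge, so every cluster
point of the gradients is the derivative of `w` at `x`. By uniqueness of the derivative the
gradients converge to that of `w`, and the Hölder bounds pass to the limit. -/

section TaylorRemainder

variable {V W : Type*} [NormedAddCommGroup V] [NormedSpace ℝ V]
  [NormedAddCommGroup W] [NormedSpace ℝ W] {x y : V} {C χ : ℝ}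

lemma norm_sub_sub_fderiv_le_of_holder_segment {f : V → W} (hC : 0 ≤ C) (hχ : 0 ≤ χ)
    (hf : ∀ z ∈ segment ℝ x y, DifferentiableAt ℝ f z)
    (hf' : ∀ z ∈ segment ℝ x y, ‖fderiv ℝ f z - fderiv ℝ f x‖ ≤ C * ‖z - x‖ ^ χ) :
    ‖f y - f x - fderiv ℝ f x (y - x)‖ ≤ C * ‖y - x‖ ^ χ * ‖y - x‖ := by
  refine (convex_segment x y).norm_image_sub_le_of_norm_fderiv_le' hf (fun z hz => ?_)
    (left_mem_segment ℝ x y) (right_mem_segment ℝ x y)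
  have hzx : ‖z - x‖ ≤ ‖y - x‖ := norm_sub_le_of_mem_segment hz
  exact (hf' z hz).trans (by gcongr)

lemma hasFDerivAt_of_norm_sub_sub_le_rpow {g : V → W} {L : V →L[ℝ] W} (hχ : 0 < χ)
    (hg : ∀ᶠ y in 𝓝 x, ‖g y - g x - L (y - x)‖ ≤ C * ‖y - x‖ ^ χ * ‖y - x‖) :
    HasFDerivAt g L x := by
  have hmodulus : Tendsto (fun y => C * ‖y - x‖ ^ χ) (𝓝 x) (𝓝 0) := by
    have hcont : Continuous fun y => C * ‖y - x‖ ^ χ := by fun_prop (disch := exact hχ.le)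
    simpa [Real.zero_rpow hχ.ne'] using hcont.tendsto x
  refine .of_isLittleO (Asymptotics.isLittleO_iff.2 fun η hη => ?_)
  filter_upwards [hmodulus.eventually_le_const hη, hg] with y hy hgy
  exact hgy.trans (by gcongr)

variable {ι : Type*} {l : Filter ι} {s : Set V} {f : ι → V → W} {f' : ι → V →L[ℝ] W} {g : V → W}

lemma hasFDerivAt_of_tendsto_of_norm_sub_sub_le_rpow [l.NeBot] {L : V →L[ℝ] W} (hχ : 0 < χ)
    (hs : s ∈ 𝓝 x)
    (htaylor : ∀ᶠ i in l, ∀ y ∈ s,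
      ‖f i y - f i x - f' i (y - x)‖ ≤ C * ‖y - x‖ ^ χ * ‖y - x‖)
    (hf : ∀ y ∈ s, Tendsto (f · y) l (𝓝 (g y)))
    (hf' : ∀ v, Tendsto (f' · v) l (𝓝 (L v))) :
    HasFDerivAt g L x := by
  refine hasFDerivAt_of_norm_sub_sub_le_rpow (C := C) hχ ?_
  filter_upwards [hs] with y hy
  have hremainder : Tendsto (fun i => f i y - f i x - f' i (y - x)) l
      (𝓝 (g y - g x - L (y - x))) :=
    ((hf y hy).sub (hf x (mem_of_mem_nhds hs))).sub (hf' (y - x))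
  exact le_of_tendsto hremainder.norm (htaylor.mono fun i hi => hi y hy)

lemma exists_hasFDerivAt_tendsto_of_norm_sub_sub_le_rpow [FiniteDimensional ℝ V]
    [FiniteDimensional ℝ W] [l.NeBot] {M : ℝ} (hχ : 0 < χ) (hs : s ∈ 𝓝 x)
    (hbdd : ∀ᶠ i in l, ‖f' i‖ ≤ M)
    (htaylor : ∀ᶠ i in l, ∀ y ∈ s,
      ‖f i y - f i x - f' i (y - x)‖ ≤ C * ‖y - x‖ ^ χ * ‖y - x‖)
    (hf : ∀ y ∈ s, Tendsto (f · y) l (𝓝 (g y))) :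
    ∃ L : V →L[ℝ] W, HasFDerivAt g L x ∧ Tendsto f' l (𝓝 L) := by
  have hcompact : IsCompact (Metric.closedBall (0 : V →L[ℝ] W) M) := isCompact_closedBall 0 M
  have hmem : ∀ᶠ i in l, f' i ∈ Metric.closedBall (0 : V →L[ℝ] W) M :=
    hbdd.mono fun i hi => mem_closedBall_zero_iff.2 hi
  have hcluster : ∀ L, MapClusterPt L l f' → HasFDerivAt g L x := fun L hL => by
    obtain ⟨U, hUl, hUL⟩ := mapClusterPt_iff_ultrafilter.1 hL
    exact hasFDerivAt_of_tendsto_of_norm_sub_sub_le_rpow hχ hs (htaylor.filter_mono hUl)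
      (fun y hy => (hf y hy).mono_left hUl)
      fun v => ((ContinuousLinearMap.apply ℝ W v).continuous.tendsto L).comp hUL
  obtain ⟨L, -, hL⟩ := hcompact.exists_mapClusterPt_of_frequently hmem.frequently
  exact ⟨L, hcluster L hL, hcompact.tendsto_nhds_of_unique_mapClusterPt hmem
    fun L' _ hL' => (hcluster L' hL').unique (hcluster L hL)⟩

end TaylorRemainder

lemma vecNorm_apply_single {d : ℕ} (L : E d →L[ℝ] ℝ) :
    vecNorm (fun i => L (EuclideanSpace.single i 1)) = ‖L‖ := by
  obtain ⟨v, rfl⟩ := (InnerProductSpace.toDual ℝ (E d)).surjective L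
  simp [vecNorm, EuclideanSpace.norm_eq, EuclideanSpace.inner_single_right]

lemma vecNorm_D1_sub {d : ℕ} (u : E d → ℝ) (x y : E d) :
    vecNorm (fun i => D1 u x i - D1 u y i) = ‖fderiv ℝ u x - fderiv ℝ u y‖ :=
  vecNorm_apply_single (fderiv ℝ u x - fderiv ℝ u y)

lemma isOpen_Gshrink {d : ℕ} {G : Set (E d)} (hG : IsOpen G) (ε : ℝ) : IsOpen (Gshrink G ε) :=
  hG.inter (isOpen_lt continuous_const (Metric.continuous_infDist_pt _))

namespace HolderBound

variable {d : ℕ} {χ C : ℝ} {Q : Set (E d)} {x y : E d}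

section SingleFunction

variable {u : E d → ℝ}

lemma nonneg (h : HolderBound χ Q u C) (hx : x ∈ Q) : 0 ≤ C :=
  (abs_nonneg (u x)).trans (h.2.1 x hx)

lemma norm_fderiv_le (h : HolderBound χ Q u C) (hQ : Q ∈ 𝓝 x) : ‖fderiv ℝ u x‖ ≤ C := by
  have hx : x ∈ Q := mem_of_mem_nhds hQ
  refine norm_fderiv_le_of_lip' ℝ (h.nonneg hx) ?_
  filter_upwards [hQ] with y hy using h.2.2.1 y hy x hx

lemma norm_fderiv_sub_le (h : HolderBound χ Q u C) (hx : x ∈ Q) (hy : y ∈ Q) :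
    ‖fderiv ℝ u x - fderiv ℝ u y‖ ≤ C * ‖x - y‖ ^ χ :=
  (vecNorm_D1_sub u x y).symm.trans_le (h.2.2.2 x hx y hy)

lemma norm_sub_sub_fderiv_le (h : HolderBound χ Q u C) (hχ : 0 ≤ χ) (hxy : segment ℝ x y ⊆ Q) :
    ‖u y - u x - fderiv ℝ u x (y - x)‖ ≤ C * ‖y - x‖ ^ χ * ‖y - x‖ :=
  have hx : x ∈ Q := hxy (left_mem_segment ℝ x y)
  norm_sub_sub_fderiv_le_of_holder_segment (h.nonneg hx) hχ (fun z hz => h.1 z (hxy hz))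
    fun _ hz => h.norm_fderiv_sub_le (hxy hz) hx

end SingleFunction

variable {ι : Type*} {l : Filter ι} [l.NeBot] {u : ι → E d → ℝ} {w : E d → ℝ}

lemma exists_hasFDerivAt_tendsto (hχ : 0 < χ) (hQ : Q ∈ 𝓝 x)
    (hu : ∀ᶠ i in l, HolderBound χ Q (u i) C)
    (hw : ∀ y ∈ Q, Tendsto (u · y) l (𝓝 (w y))) :
    ∃ L : E d →L[ℝ] ℝ, HasFDerivAt w L x ∧ Tendsto (fun i => fderiv ℝ (u i) x) l (𝓝 L) := by
  obtain ⟨r, hr, hball⟩ := Metric.mem_nhds_iff.1 hQ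
  refine exists_hasFDerivAt_tendsto_of_norm_sub_sub_le_rpow (C := C) hχ
    (Metric.ball_mem_nhds x hr) (hu.mono fun i hi => hi.norm_fderiv_le hQ)
    (hu.mono fun i hi y hy => ?_) fun y hy => hw y (hball hy)
  have hsegment : segment ℝ x y ⊆ Metric.ball x r :=
    (convex_ball x r).segment_subset (Metric.mem_ball_self hr) hy
  exact hi.norm_sub_sub_fderiv_le hχ.le (hsegment.trans hball)

end HolderBound

theorem statement10_general {ι : Type*} {l : Filter ι} [l.NeBot] {d : ℕ} {χ C : ℝ}
    {Q : Set (E d)} {u : ι → E d → ℝ} {w : E d → ℝ} (hχ : 0 < χ) (hQ : IsOpen Q)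
    (hu : ∀ᶠ i in l, HolderBound χ Q (u i) C)
    (hw : ∀ x ∈ Q, Tendsto (u · x) l (𝓝 (w x))) : HolderBound χ Q w C := by
  have hgrad : ∀ x ∈ Q,
      DifferentiableAt ℝ w x ∧ Tendsto (fun i => fderiv ℝ (u i) x) l (𝓝 (fderiv ℝ w x)) := by
    intro x hx
    obtain ⟨L, hwL, huL⟩ := HolderBound.exists_hasFDerivAt_tendsto hχ (hQ.mem_nhds hx) hu hw
    exact ⟨hwL.differentiableAt, hwL.fderiv ▸ huL⟩
  refine ⟨fun x hx => (hgrad x hx).1, fun x hx => ?_, fun x hx y hy => ?_, fun x hx y hy => ?_⟩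
  · exact le_of_tendsto (hw x hx).abs (hu.mono fun i hi => hi.2.1 x hx)
  · exact le_of_tendsto ((hw x hx).sub (hw y hy)).abs (hu.mono fun i hi => hi.2.2.1 x hx y hy)
  · rw [vecNorm_D1_sub]
    exact le_of_tendsto ((hgrad x hx).2.sub (hgrad y hy).2).norm
      (hu.mono fun i hi => hi.norm_fderiv_sub_le hx hy)

/-- **Theorem 2.5 (iv).** For any `ε ∈ (0,1]` with `G_ε ≠ ∅` one has
`‖w‖_{C^{1+χ}(G_ε)} ≤ N ε^{-1-χ}`, with `N` the constant from the interior
`C^{1+χ}` estimate for `u_K` and `v_K`. -/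
theorem statement10 {d : ℕ} {A B : Type} [MetricSpace A] [MetricSpace B]
    (δ K0 χ γ δhat K1 : ℝ) (ω : ℝ → ℝ)
    (a : A → B → E d → Fin d → Fin d → ℝ) (b : A → B → E d → Fin d → ℝ)
    (c f : A → B → E d → ℝ) (G : Set (E d)) (g : E d → ℝ)
    (P : (Fin d → Fin d → ℝ) → (Fin d → ℝ) → ℝ → ℝ)
    (hset : Setting δ K0 χ γ δhat K1 ω a b c f G g P)
    (hmod : ModulusAssump χ ω)
    (uK vK : ℝ → E d → ℝ)
    (hsol : ∀ K : ℝ, 0 ≤ K →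
      IsUSol a b c f G g P K (uK K) ∧ IsVSol a b c f G g P K (vK K))
    (N : ℝ) (hN : 0 < N)
    (hbound : ∀ K : ℝ, 0 ≤ K → ∀ ε : ℝ, ε ∈ Set.Ioc (0:ℝ) 1 → (Gshrink G ε).Nonempty →
      HolderBound χ (Gshrink G ε) (uK K) (N * ε ^ (-1 - χ)) ∧
      HolderBound χ (Gshrink G ε) (vK K) (N * ε ^ (-1 - χ)))
    (w : E d → ℝ)
    (hw : TendstoUniformlyOn (fun K => uK K) w Filter.atTop (closure G)) :
    ∀ ε : ℝ, ε ∈ Set.Ioc (0:ℝ) 1 → (Gshrink G ε).Nonempty →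
      HolderBound χ (Gshrink G ε) w (N * ε ^ (-1 - χ)) := by
  obtain ⟨-, -, -, -, hχ, -, -, -, -, -, -, -, -, -, -, ⟨hG, -⟩, -, -⟩ := hset
  exact fun ε hε hne => statement10_general hχ (isOpen_Gshrink hG ε)
    ((eventually_ge_atTop 0).mono fun K hK => (hbound K hK ε hε hne).1)
    fun x hx => hw.tendsto_at (subset_closure hx.1)
end
end
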